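/- arXiv:0804.2313 — 4 statements merged into one kernel-verified Lean document; each statement's English description precedes it below -/
import Mathlib

section
/- For every t > 0 and every Schwartz function ψ on ℝ, ‖ψ‖_{L^∞}² ≤ (1/(2t)) ‖ψ‖_{L²} ‖𝒰(t)( x · 𝒰(−t)ψ )‖_{L²}. -/
/-!
On the Fourier side multiplication by `x` is a derivative, so a Fourier multiplier with symbol `g`
commutes with it up to the multiplier with symbol `g'`. For the symbol of `𝒰(t)` this says
`J := 𝒰(t) x 𝒰(-t) = x - 2it ∂ₓ`, which the phase `e^{ix²/(4t)}` turns into a pure derivative: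
`∂ₓ (e^{ix²/(4t)} ψ) = (i/(2t)) e^{ix²/(4t)} J ψ`. The bound is therefore
`‖f‖_∞² ≤ ‖f‖₂ ‖f'‖₂` for `f = e^{ix²/(4t)} ψ`, and that follows by integrating `(|f|²)'` over
both half-lines ending at a point and applying Cauchy–Schwarz.
-/

open MeasureTheory Filter Real Set
open scoped ENNReal Topology

/-- The Fourier transform normalized by `f̂(ξ) = ∫ e^{-ixξ} f(x) dx`. -/
noncomputable def FT (f : ℝ → ℂ) (ξ : ℝ) : ℂ :=
  ∫ x : ℝ, Complex.exp (-(Complex.I * x * ξ)) * f x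

/-- The free Schrödinger group `𝒰(t)`, the Fourier multiplier with symbol `e^{itξ²}`,
realized via the inverse Fourier transform. -/
noncomputable def schrodU (t : ℝ) (f : ℝ → ℂ) : ℝ → ℂ :=
  fun x => (2 * π : ℝ)⁻¹ •
    ∫ ξ : ℝ, Complex.exp (Complex.I * x * ξ) * (Complex.exp (Complex.I * t * ξ ^ 2) * FT f ξ)

open SchwartzMap (smulLeftCLM fourierMultiplierCLM smulLeftCLM_apply_apply)
open scoped FourierTransform SchwartzMap LineDeriv

/-! ### The one-dimensional Agmon inequality -/

section Agmon

variable {E : Type*} [NormedAddCommGroup E]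

lemma two_mul_norm_le_integral_norm_of_hasDerivAt [NormedSpace ℝ E] [CompleteSpace E]
    {g g' : ℝ → E} (hderiv : ∀ x, HasDerivAt g (g' x) x) (hg : Integrable g)
    (hg' : Integrable g') (x : ℝ) : 2 * ‖g x‖ ≤ ∫ y, ‖g' y‖ := by
  have hbot : ∫ y in Iic x, g' y = g x := by
    simpa using integral_Iic_of_hasDerivAt_of_tendsto' (fun y _ => hderiv y) hg'.integrableOn
      (tendsto_zero_of_hasDerivAt_of_integrableOn_Iic (a := x) (fun y _ => hderiv y)
        hg'.integrableOn hg.integrableOn)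
  have htop : ∫ y in Ioi x, g' y = -g x := by
    simpa using integral_Ioi_of_hasDerivAt_of_tendsto' (fun y _ => hderiv y) hg'.integrableOn
      (tendsto_zero_of_hasDerivAt_of_integrableOn_Ioi (a := x) (fun y _ => hderiv y)
        hg'.integrableOn hg.integrableOn)
  calc 2 * ‖g x‖ = ‖∫ y in Iic x, g' y‖ + ‖∫ y in Ioi x, g' y‖ := by
        rw [hbot, htop, norm_neg, two_mul]
    _ ≤ (∫ y in Iic x, ‖g' y‖) + ∫ y in Ioi x, ‖g' y‖ :=
        add_le_add (norm_integral_le_integral_norm _) (norm_integral_le_integral_norm _)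
    _ = ∫ y, ‖g' y‖ :=
        intervalIntegral.integral_Iic_add_Ioi hg'.norm.integrableOn hg'.norm.integrableOn

variable {𝕜 α : Type*} [RCLike 𝕜] [InnerProductSpace 𝕜 E] {m : MeasurableSpace α} {μ : Measure α}
  {f g : α → E}

lemma integrable_inner_of_memLp_two (hf : MemLp f 2 μ) (hg : MemLp g 2 μ) :
    Integrable (fun x => inner 𝕜 (f x) (g x)) μ :=
  memLp_one_iff_integrable.1 <| hf.of_bilin (inner 𝕜) 1 hg (hf.1.inner hg.1) <|
    ae_of_all _ fun x => by simpa using nnnorm_inner_le_nnnorm (𝕜 := 𝕜) (f x) (g x)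

lemma integral_norm_inner_le_eLpNorm_mul_eLpNorm (hf : MemLp f 2 μ) (hg : MemLp g 2 μ) :
    ∫ x, ‖inner 𝕜 (f x) (g x)‖ ∂μ ≤ (eLpNorm f 2 μ).toReal * (eLpNorm g 2 μ).toReal := by
  have holder : eLpNorm (fun x => inner 𝕜 (f x) (g x)) 1 μ ≤ eLpNorm f 2 μ * eLpNorm g 2 μ := by
    simpa using eLpNorm_le_eLpNorm_mul_eLpNorm_of_nnnorm hf.1 hg.1 (inner 𝕜) 1
      (ae_of_all _ fun x => by simpa using nnnorm_inner_le_nnnorm (𝕜 := 𝕜) (f x) (g x))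
  rw [integral_norm_eq_lintegral_enorm (hf.1.inner hg.1), ← eLpNorm_one_eq_lintegral_enorm,
    ← ENNReal.toReal_mul]
  exact ENNReal.toReal_mono (ENNReal.mul_ne_top hf.2.ne hg.2.ne) holder

lemma norm_sq_le_eLpNorm_mul_eLpNorm_of_hasDerivAt [InnerProductSpace ℝ E] {f f' : ℝ → E}
    (hderiv : ∀ x, HasDerivAt f (f' x) x) (hf : MemLp f 2) (hf' : MemLp f' 2) (x : ℝ) :
    ‖f x‖ ^ 2 ≤ (eLpNorm f 2).toReal * (eLpNorm f' 2).toReal := by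
  have key := two_mul_norm_le_integral_norm_of_hasDerivAt (fun y => (hderiv y).norm_sq)
    ((memLp_two_iff_integrable_sq_norm hf.1).1 hf)
    ((integrable_inner_of_memLp_two (𝕜 := ℝ) hf hf').const_mul 2) x
  simp only [norm_mul, norm_pow, norm_norm, Real.norm_ofNat, integral_const_mul] at key
  linarith [integral_norm_inner_le_eLpNorm_mul_eLpNorm (𝕜 := ℝ) hf hf']

lemma norm_sq_le_eLpNorm_mul_eLpNorm_lineDerivOp [InnerProductSpace ℝ E] (f : 𝓢(ℝ, E)) (x : ℝ) :
    ‖f x‖ ^ 2 ≤ (eLpNorm f 2).toReal * (eLpNorm (∂_{(1 : ℝ)} f : 𝓢(ℝ, E)) 2).toReal := by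
  have hderiv (y : ℝ) : HasDerivAt f (∂_{(1 : ℝ)} f y) y := (f.hasFDerivAt y).hasDerivAt
  exact norm_sq_le_eLpNorm_mul_eLpNorm_of_hasDerivAt hderiv (f.memLp 2)
    ((∂_{(1 : ℝ)} f).memLp 2) x

end Agmon

/-! ### Commuting Fourier multipliers with multiplication by coordinates -/

section Commutator

variable {E F : Type*} [NormedAddCommGroup E] [NormedAddCommGroup F] [NormedSpace ℂ F]

lemma lineDerivOp_smulLeftCLM [NormedSpace ℝ E] {g g' : E → ℂ} {m : E}
    (hg : g.HasTemperateGrowth) (hg' : g'.HasTemperateGrowth)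
    (hderiv : ∀ x, HasLineDerivAt ℝ g (g' x) x m) (f : 𝓢(E, F)) :
    ∂_{m} (smulLeftCLM F g f) = smulLeftCLM F g (∂_{m} f) + smulLeftCLM F g' f := by
  ext x
  have hf : HasLineDerivAt ℝ f (∂_{m} f x) x m := (f.hasFDerivAt x).hasLineDerivAt m
  have hprod : HasLineDerivAt ℝ (smulLeftCLM F g f) (g x • ∂_{m} f x + g' x • f x) x m := by
    rw [SchwartzMap.smulLeftCLM_apply hg]
    simpa [HasLineDerivAt] using HasDerivAt.fun_smul (hderiv x) hf
  rw [SchwartzMap.lineDerivOp_apply, hprod.lineDeriv, add_apply,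
    smulLeftCLM_apply_apply hg, smulLeftCLM_apply_apply hg']

variable [InnerProductSpace ℝ E] [FiniteDimensional ℝ E] [MeasurableSpace E] [BorelSpace E]

lemma fourierMultiplierCLM_smulLeftCLM_inner {g g' : E → ℂ} {m : E}
    (hg : g.HasTemperateGrowth) (hg' : g'.HasTemperateGrowth)
    (hderiv : ∀ x, HasLineDerivAt ℝ g (g' x) x m) (f : 𝓢(E, F)) :
    fourierMultiplierCLM F g (smulLeftCLM F (inner ℝ · m) f) =
      smulLeftCLM F (inner ℝ · m) (fourierMultiplierCLM F g f) +
        (2 * π * Complex.I)⁻¹ • fourierMultiplierCLM F g' f := by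
  have leibniz := congrArg 𝓕⁻ (lineDerivOp_smulLeftCLM hg hg' hderiv (𝓕 f))
  rw [SchwartzMap.fourierInv_lineDerivOp_eq, SchwartzMap.lineDerivOp_fourier_eq,
    FourierTransform.fourierInv_add, FourierTransform.fourier_smul, map_smul,
    FourierTransform.fourierInv_smul] at leibniz
  simp only [← SchwartzMap.fourierMultiplierCLM_apply] at leibniz
  have hc : 2 * π * Complex.I ≠ 0 := Complex.two_pi_I_ne_zero
  refine smul_right_injective _ hc ?_
  simp only [smul_add, smul_inv_smul₀ hc]
  linear_combination (norm := module) leibniz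

end Commutator

/-! ### The conjugated position operator -/

lemma hasTemperateGrowth_cexp_mul_I :
    Function.HasTemperateGrowth fun x : ℝ => Complex.exp (x * Complex.I) := by
  have hderiv (x : ℝ) : HasDerivAt (fun x : ℝ => Complex.exp (x * Complex.I))
      (Complex.I * Complex.exp (x * Complex.I)) x := by
    simpa [mul_comm] using ((hasDerivAt_id x).ofReal_comp.mul_const Complex.I).cexp
  have hiter (n : ℕ) : iteratedDeriv n (fun x : ℝ => Complex.exp (x * Complex.I)) =
      fun x : ℝ => Complex.I ^ n * Complex.exp (x * Complex.I) := by
    induction n with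
    | zero => simp
    | succ n ih =>
      ext x
      rw [iteratedDeriv_succ, ih, ((hderiv x).const_mul _).deriv, pow_succ, mul_assoc]
  refine ⟨(Complex.ofRealCLM.contDiff.mul contDiff_const).cexp, fun n => ⟨0, 1, fun x => ?_⟩⟩
  simp [norm_iteratedFDeriv_eq_norm_iteratedDeriv, hiter, Complex.norm_exp_ofReal_mul_I]

section Chirp

variable {E F : Type*} [NormedAddCommGroup E] [NormedAddCommGroup F] [NormedSpace ℂ F]

/-- The quadratic phase `x ↦ e^{ic|x|²}`. It is both the symbol of the free Schrödinger group and
the phase that turns the conjugated position operator into a derivative. -/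
noncomputable def chirp (c : ℝ) (x : E) : ℂ := Complex.exp ((c * ‖x‖ ^ 2 : ℝ) * Complex.I)

lemma norm_chirp (c : ℝ) (x : E) : ‖chirp c x‖ = 1 := Complex.norm_exp_ofReal_mul_I _

lemma chirp_mul_chirp_neg (c : ℝ) (x : E) : chirp c x * chirp (-c) x = 1 := by
  rw [chirp, chirp, ← Complex.exp_add, ← add_mul, ← Complex.ofReal_add, neg_mul,
    add_neg_cancel, Complex.ofReal_zero, zero_mul, Complex.exp_zero]

variable [InnerProductSpace ℝ E]

@[fun_prop]
lemma hasTemperateGrowth_chirp (c : ℝ) : (chirp c : E → ℂ).HasTemperateGrowth := by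
  have hquad : Function.HasTemperateGrowth fun x : E => c * ‖x‖ ^ 2 := by fun_prop
  exact hasTemperateGrowth_cexp_mul_I.comp hquad

lemma hasLineDerivAt_chirp (c : ℝ) (m x : E) :
    HasLineDerivAt ℝ (chirp c) (2 * c * Complex.I * (inner ℝ x m : ℝ) * chirp c x) x m := by
  have hline : HasDerivAt (fun s : ℝ => x + s • m) m 0 := by
    simpa using ((hasDerivAt_id (0 : ℝ)).smul_const m).const_add x
  refine ((hline.norm_sq.const_mul c).ofReal_comp.mul_const Complex.I).cexp.congr_deriv ?_
  simp only [zero_smul, add_zero, chirp]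
  push_cast
  ring

lemma norm_smulLeftCLM_chirp_apply (c : ℝ) (f : 𝓢(E, F)) (x : E) :
    ‖smulLeftCLM F (chirp c) f x‖ = ‖f x‖ := by
  rw [smulLeftCLM_apply_apply (hasTemperateGrowth_chirp c), norm_smul, norm_chirp, one_mul]

lemma eLpNorm_smulLeftCLM_chirp [MeasurableSpace E] (c : ℝ) (f : 𝓢(E, F)) (p : ℝ≥0∞)
    (μ : Measure E) : eLpNorm (smulLeftCLM F (chirp c) f) p μ = eLpNorm f p μ :=
  eLpNorm_congr_norm_ae <| ae_of_all _ <| norm_smulLeftCLM_chirp_apply c f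

lemma lineDerivOp_smulLeftCLM_chirp {t : ℝ} (ht : t ≠ 0) (m : E) (f : 𝓢(E, F)) :
    ∂_{m} (smulLeftCLM F (chirp (4 * t)⁻¹) f) = (Complex.I / (2 * t)) •
      smulLeftCLM F (chirp (4 * t)⁻¹)
        (smulLeftCLM F (inner ℝ · m) f - (2 * Complex.I * t) • ∂_{m} f) := by
  rw [lineDerivOp_smulLeftCLM (by fun_prop) (by fun_prop) (hasLineDerivAt_chirp _ m)]
  ext x
  have htc : (t : ℂ) ≠ 0 := mod_cast ht
  have hI : Complex.I / (2 * t) * (2 * Complex.I * t) = -1 := by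
    field_simp
    exact Complex.I_sq
  rw [add_apply, smulLeftCLM_apply_apply (by fun_prop), smulLeftCLM_apply_apply (by fun_prop),
    smul_apply, smulLeftCLM_apply_apply (by fun_prop), sub_apply,
    smulLeftCLM_apply_apply (by fun_prop), smul_apply, ← Complex.coe_smul]
  push_cast
  match_scalars
  · linear_combination chirp (4 * t)⁻¹ x * hI
  · field_simp
    norm_num

variable [FiniteDimensional ℝ E] [MeasurableSpace E] [BorelSpace E]

/-- The free Schrödinger group on Schwartz functions. Mathlib's Fourier variable is `w = ξ / (2π)`,
so the symbol `e^{it|ξ|²}` becomes `e^{4π²it|w|²}`. -/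
noncomputable def schrodingerGroup (t : ℝ) : 𝓢(E, F) →L[ℂ] 𝓢(E, F) :=
  fourierMultiplierCLM F (chirp (4 * π ^ 2 * t))

variable [CompleteSpace F]

lemma schrodingerGroup_schrodingerGroup_neg (t : ℝ) (f : 𝓢(E, F)) :
    schrodingerGroup t (schrodingerGroup (-t) f) = f := by
  have hsymbol : (chirp (4 * π ^ 2 * t) * chirp (-(4 * π ^ 2 * t)) : E → ℂ) = fun _ => 1 :=
    funext (chirp_mul_chirp_neg _)
  rw [schrodingerGroup, schrodingerGroup,
    SchwartzMap.fourierMultiplierCLM_fourierMultiplierCLM_apply (by fun_prop) (by fun_prop),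
    mul_neg, hsymbol, SchwartzMap.fourierMultiplierCLM_const, one_smul,
    ContinuousLinearMap.id_apply]

lemma schrodingerGroup_smulLeftCLM_inner (t : ℝ) (m : E) (f : 𝓢(E, F)) :
    schrodingerGroup t (smulLeftCLM F (inner ℝ · m) f) =
      smulLeftCLM F (inner ℝ · m) (schrodingerGroup t f) -
        (2 * Complex.I * t) • ∂_{m} (schrodingerGroup t f) := by
  set c := 4 * π ^ 2 * t with hc
  have hsymbol : (fun x : E => 2 * c * Complex.I * (inner ℝ x m : ℝ) * chirp c x) =
      (2 * c * Complex.I) • ((fun x : E => ((inner ℝ x m : ℝ) : ℂ)) * chirp c) := by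
    ext x
    simp only [Pi.smul_apply, Pi.mul_apply, smul_eq_mul, mul_assoc]
  have hcoef : (2 * π * Complex.I)⁻¹ * (2 * c * Complex.I) =
      -(2 * Complex.I * t * (2 * π * Complex.I)) := by
    rw [hc]
    push_cast
    field_simp
    rw [Complex.I_sq]
    norm_num
  rw [schrodingerGroup, ← hc, fourierMultiplierCLM_smulLeftCLM_inner (by fun_prop) (by fun_prop)
    (hasLineDerivAt_chirp c m), sub_eq_add_neg, hsymbol,
    SchwartzMap.fourierMultiplierCLM_smul (by fun_prop), smul_apply,
    ← SchwartzMap.fourierMultiplierCLM_fourierMultiplierCLM_apply (by fun_prop) (by fun_prop),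
    SchwartzMap.lineDeriv_eq_fourierMultiplierCLM,
    ← SchwartzMap.fourierMultiplierCLM_ofReal ℂ (g := (inner ℝ · m)) (by fun_prop), smul_smul,
    smul_smul, hcoef, neg_smul]
  rfl

lemma schrodingerGroup_smulLeftCLM_inner_schrodingerGroup_neg (t : ℝ) (m : E) (f : 𝓢(E, F)) :
    schrodingerGroup t (smulLeftCLM F (inner ℝ · m) (schrodingerGroup (-t) f)) =
      smulLeftCLM F (inner ℝ · m) f - (2 * Complex.I * t) • ∂_{m} f := by
  rw [schrodingerGroup_smulLeftCLM_inner, schrodingerGroup_schrodingerGroup_neg]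

lemma eLpNorm_lineDerivOp_smulLeftCLM_chirp {t : ℝ} (ht : t ≠ 0) (m : E) (f : 𝓢(E, F))
    (p : ℝ≥0∞) (μ : Measure E) :
    eLpNorm (∂_{m} (smulLeftCLM F (chirp (4 * t)⁻¹) f) : 𝓢(E, F)) p μ = ‖(2 * t)⁻¹‖ₑ *
      eLpNorm (schrodingerGroup t (smulLeftCLM F (inner ℝ · m) (schrodingerGroup (-t) f))) p μ := by
  have hcoef : ‖Complex.I / (2 * t)‖ₑ = ‖(2 * t)⁻¹‖ₑ := by simp [← ofReal_norm]
  rw [lineDerivOp_smulLeftCLM_chirp ht, ← schrodingerGroup_smulLeftCLM_inner_schrodingerGroup_neg,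
    FunLike.coe_smul, eLpNorm_const_smul, eLpNorm_smulLeftCLM_chirp, hcoef]

end Chirp

/-! ### Comparison with the explicit Fourier integrals -/

lemma FT_two_pi_mul (f : ℝ → ℂ) (w : ℝ) : FT f (2 * π * w) = 𝓕 f w := by
  rw [FT, Real.fourier_real_eq_integral_exp_smul]
  congr 1 with x
  rw [smul_eq_mul]
  congr 2
  push_cast
  ring

lemma schrodU_eq_fourierInv (t : ℝ) (f : ℝ → ℂ) :
    schrodU t f = 𝓕⁻ (fun w : ℝ => chirp (4 * π ^ 2 * t) w * 𝓕 f w) := by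
  ext x
  have hsubst := Measure.integral_comp_mul_left (fun ξ : ℝ => Complex.exp (Complex.I * x * ξ) *
    (Complex.exp (Complex.I * t * ξ ^ 2) * FT f ξ)) (2 * π)
  rw [abs_of_pos (by positivity)] at hsubst
  rw [schrodU, ← hsubst, Real.fourierInv_eq']
  congr 1 with w
  rw [FT_two_pi_mul, smul_eq_mul, chirp, Real.norm_eq_abs, sq_abs]
  congr 2
  · simp only [RCLike.inner_apply, conj_trivial]
    push_cast
    ring
  · congr 1
    push_cast
    ring

lemma coe_schrodingerGroup (t : ℝ) (f : 𝓢(ℝ, ℂ)) : ⇑(schrodingerGroup t f) = schrodU t f := by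
  rw [schrodU_eq_fourierInv, schrodingerGroup, SchwartzMap.fourierMultiplierCLM_apply,
    SchwartzMap.fourierInv_coe, SchwartzMap.smulLeftCLM_apply (by fun_prop),
    SchwartzMap.fourier_coe]
  rfl

theorem schrodinger_weighted_bound_general {F : Type*} [NormedAddCommGroup F]
    [InnerProductSpace ℂ F] [CompleteSpace F] {t : ℝ} (ht : t ≠ 0) (ψ : 𝓢(ℝ, F)) (x : ℝ) :
    ‖ψ x‖ ^ 2 ≤ 1 / (2 * |t|) * (eLpNorm ψ 2).toReal * (eLpNorm (schrodingerGroup t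
      (smulLeftCLM F (fun y : ℝ => y) (schrodingerGroup (-t) ψ))) 2).toReal := by
  let _ : InnerProductSpace ℝ F := .complexToReal
  have hcoord : (inner ℝ · 1 : ℝ → ℝ) = fun y => y := funext fun y => by simp
  have hcoef : ‖(2 * t)⁻¹‖ = 1 / (2 * |t|) := by simp
  have key := norm_sq_le_eLpNorm_mul_eLpNorm_lineDerivOp (smulLeftCLM F (chirp (4 * t)⁻¹) ψ) x
  rwa [norm_smulLeftCLM_chirp_apply, eLpNorm_smulLeftCLM_chirp,
    eLpNorm_lineDerivOp_smulLeftCLM_chirp ht, hcoord, ENNReal.toReal_mul, toReal_enorm, hcoef,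
    mul_left_comm, ← mul_assoc] at key

/-- For every `t > 0` and Schwartz `ψ`,
`‖ψ‖_{L^∞}² ≤ (1/(2t)) ‖ψ‖_{L²} ‖𝒰(t)(x · 𝒰(-t)ψ)‖_{L²}` (stated pointwise in `x`). -/
theorem schrodinger_weighted_bound (t : ℝ) (ht : 0 < t) (ψ : SchwartzMap ℝ ℂ) :
    ∀ x : ℝ, ‖ψ x‖ ^ 2 ≤
      (1 / (2 * t)) * (eLpNorm (⇑ψ) 2 (volume : Measure ℝ)).toReal *
        (eLpNorm (schrodU t (fun y : ℝ => (y : ℂ) * schrodU (-t) (⇑ψ) y)) 2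
          (volume : Measure ℝ)).toReal := by
  intro x
  simpa only [coe_schrodingerGroup, SchwartzMap.smulLeftCLM_apply Function.HasTemperateGrowth.id',
    Complex.real_smul, abs_of_pos ht] using schrodinger_weighted_bound_general ht.ne' ψ x
end

section
/- Let φ be a Schwartz function on ℝ. Then for every x ∈ ℝ, |U(1)φ(x)|² = 2 Re ∫_ℝ Ai(x−y) · y φ(y) · [ p.v. ∫_ℝ Ai(x−z) \overline{φ(z)} / (y−z) dz ] dy, where the inner principal-value integral is p.v. ∫ f(z)/(y−z) dz = lim_{ε→0⁺} ∫_{|y−z|>ε} f(z)/(y−z) dz. -/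
open MeasureTheory Filter Real Set
open scoped ENNReal Topology

/-- The Airy function, defined by the improper integral
`Ai z = (1/π) ∫₀^∞ cos (ξ³/3 + ξ z) dξ` (as a limit of integrals over `[0, R]`). -/
noncomputable def Ai (z : ℝ) : ℝ :=
  limUnder atTop (fun R : ℝ => (1 / π) * ∫ ξ in (0:ℝ)..R, Real.cos (ξ ^ 3 / 3 + ξ * z))

/-- The linear KdV (Airy) group: `(U t φ) x = t^{-1/3} ∫ Ai ((x-y)/t^{1/3}) φ(y) dy`. -/
noncomputable def U (t : ℝ) (φ : ℝ → ℂ) : ℝ → ℂ :=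
  fun x => (t ^ (1/3 : ℝ))⁻¹ • ∫ y : ℝ, (Ai ((x - y) / t ^ (1/3 : ℝ)) : ℂ) * φ y

/-- `(U (-t) φ) x = t^{-1/3} ∫ Ai ((y-x)/t^{1/3}) φ(y) dy` for `t > 0`. -/
noncomputable def Uneg (t : ℝ) (φ : ℝ → ℂ) : ℝ → ℂ :=
  fun x => (t ^ (1/3 : ℝ))⁻¹ • ∫ y : ℝ, (Ai ((y - x) / t ^ (1/3 : ℝ)) : ℂ) * φ y
/-- Principal value integral `p.v. ∫ f(z)/(y-z) dz = lim_{ε→0⁺} ∫_{|y-z|>ε} f(z)/(y-z) dz`. -/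
noncomputable def pv (f : ℝ → ℂ) (y : ℝ) : ℂ :=
  limUnder (𝓝[>] (0:ℝ)) (fun ε => ∫ z in {z : ℝ | ε < |y - z|}, f z / ((y : ℂ) - (z : ℂ)))

/-!
Put `f y = Ai (x - y) φ y`, so that `U 1 φ x = ∫ f`. The right-hand side is formally
`2 Re ∬ y f(y) conj(f(z)) / (y - z)`. Adding the complex conjugate and interchanging `y` and `z`
replaces the factor `y` by `y - z`, which cancels the denominator and leaves
`∬ f(y) conj(f(z)) = |∫ f|²`. The computation is legitimate on `|y - z| > ε`, and dominated
convergence gives `ε → 0⁺`: for Hölder `f` the truncated principal values are bounded uniformly in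
`ε` and `y`.

It remains to see that `f` is a Schwartz function, that is, that `Ai` has temperate growth.
Integration by parts against `(1 + ξ²)⁻¹` expresses `Ai`, and by iteration all its derivatives,
through absolutely convergent integrals with coefficients polynomial in `z`.
-/

open scoped NNReal

/-! ### Truncated principal values -/

/-- The truncated integral `∫_{|y-z|>ε} f(z)/(y-z) dz`, whose limit as `ε → 0⁺` is `pv f y`. -/
noncomputable def truncatedPV (f : ℝ → ℂ) (ε y : ℝ) : ℂ :=
  ∫ z in {z : ℝ | ε < |y - z|}, f z / ((y : ℂ) - (z : ℂ))

section TruncatedPV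

theorem integrableOn_div_ofReal_of_lt_abs {α : Type*} [MeasurableSpace α] {μ : Measure α}
    {f : α → ℂ} {d : α → ℝ} (hf : Integrable f μ) (hd : Measurable d) {ε : ℝ} (hε : 0 < ε) :
    IntegrableOn (fun a => f a / (d a : ℂ)) {a | ε < |d a|} μ := by
  have hinv : AEStronglyMeasurable (fun a => ((d a : ℂ))⁻¹) (μ.restrict {a | ε < |d a|}) :=
    (Complex.measurable_ofReal.comp hd).inv.aestronglyMeasurable
  refine hf.integrableOn.mul_bdd (c := ε⁻¹) hinv ?_
  refine ae_restrict_of_forall_mem (measurableSet_lt measurable_const hd.abs) fun a ha => ?_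
  rw [norm_inv, Complex.norm_real, Real.norm_eq_abs]
  exact inv_anti₀ hε (le_of_lt ha)

theorem setIntegral_lt_abs {E : Type*} [NormedAddCommGroup E] [NormedSpace ℝ E] {f : ℝ → E}
    {ε : ℝ} (hε : 0 ≤ ε) (hf : IntegrableOn f {u | ε < |u|}) :
    ∫ u in {u : ℝ | ε < |u|}, f u = ∫ u in Ioi ε, (f u + f (-u)) := by
  have hset : {u : ℝ | ε < |u|} = Iio (-ε) ∪ Ioi ε := by
    ext u
    simp only [mem_ofPred_eq, lt_abs, mem_union, mem_Iio, mem_Ioi, lt_neg, or_comm]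
  rw [hset] at hf ⊢
  have hneg : IntegrableOn (fun u => f (-u)) (Ioi ε) := by
    simpa using hf.left_of_union.comp_neg
  have hdisj : Disjoint (Iio (-ε)) (Ioi ε) :=
    (Iio_disjoint_Ici (neg_le_self hε)).mono_right Ioi_subset_Ici_self
  rw [setIntegral_union hdisj measurableSet_Ioi hf.left_of_union hf.right_of_union,
    integral_add hf.right_of_union hneg, integral_comp_neg_Ioi, integral_Iic_eq_integral_Iio,
    add_comm]

variable {f : ℝ → ℂ}

-- Pairing `z = y - u` with `z = y + u` exhibits the cancellation at the singularity.
theorem truncatedPV_eq_setIntegral_Ioi (hf : Integrable f) {ε : ℝ} (hε : 0 < ε) (y : ℝ) :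
    truncatedPV f ε y = ∫ u in Ioi ε, (f (y - u) - f (y + u)) / (u : ℂ) := by
  have hshift : truncatedPV f ε y = ∫ u in {u : ℝ | ε < |u|}, f (y - u) / (u : ℂ) := by
    rw [truncatedPV, ← integral_indicator (measurableSet_lt measurable_const (by fun_prop)),
      ← integral_indicator (measurableSet_lt measurable_const measurable_abs),
      ← integral_sub_left_eq_self _ volume y]
    simp [indicator]
  rw [hshift, setIntegral_lt_abs hε.le
    (integrableOn_div_ofReal_of_lt_abs (d := fun u => u) (hf.comp_sub_left y) measurable_id' hε)]
  simp only [sub_neg_eq_add, Complex.ofReal_neg, div_neg, ← sub_eq_add_neg, sub_div]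

theorem aestronglyMeasurable_truncatedPV (hf : AEStronglyMeasurable f) (ε : ℝ) :
    AEStronglyMeasurable (truncatedPV f ε) := by
  have hset (y : ℝ) : MeasurableSet {z : ℝ | ε < |y - z|} :=
    measurableSet_lt measurable_const (by fun_prop)
  have hset₂ : MeasurableSet {p : ℝ × ℝ | ε < |p.1 - p.2|} :=
    measurableSet_lt measurable_const (by fun_prop)
  have hdiff : AEStronglyMeasurable (fun p : ℝ × ℝ => ((p.1 : ℂ) - (p.2 : ℂ))⁻¹)
      (volume.prod volume) :=
    Measurable.aestronglyMeasurable (by fun_prop)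
  refine ((hf.comp_snd.mul hdiff).indicator hset₂).integral_prod_right'.congr
    (ae_of_all _ fun y => ?_)
  exact integral_indicator (f := fun z => f z / ((y : ℂ) - (z : ℂ))) (hset y)

/-- An integrable bound, with `y`-independent integral, for the folded difference quotient
`(f (y - u) - f (y + u)) / u` of an integrable `f` that is Hölder with constant `C` and
exponent `r`: the Hölder bound on `(0, 1]`, and `1 / u ≤ 1` beyond. -/
noncomputable def pvMajorant (C r : ℝ) (f : ℝ → ℂ) (y u : ℝ) : ℝ :=
  (Ioc 0 1).indicator (fun u => C * 2 ^ r * u ^ (r - 1)) u + (‖f (y - u)‖ + ‖f (y + u)‖)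

theorem integrable_indicator_Ioc_const_mul_rpow_sub_one (c : ℝ) {r : ℝ} (hr : 0 < r) :
    Integrable ((Ioc 0 1).indicator fun u : ℝ => c * u ^ (r - 1)) :=
  (integrable_indicator_iff measurableSet_Ioc).2 <|
    ((intervalIntegrable_iff_integrableOn_Ioc_of_le zero_le_one).1
      (intervalIntegral.intervalIntegrable_rpow' (by linarith))).const_mul c

theorem integrable_pvMajorant {C r : ℝ} (hr : 0 < r) (hf : Integrable f) (y : ℝ) :
    Integrable (pvMajorant C r f y) :=
  (integrable_indicator_Ioc_const_mul_rpow_sub_one _ hr).add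
    ((hf.comp_sub_left y).norm.add (hf.comp_add_left y).norm)

theorem integral_pvMajorant {C r : ℝ} (hr : 0 < r) (hf : Integrable f) (y : ℝ) :
    ∫ u, pvMajorant C r f y u = C * 2 ^ r / r + 2 * ∫ u, ‖f u‖ := by
  have hpow : ∫ u in Ioc (0 : ℝ) 1, u ^ (r - 1) = 1 / r := by
    rw [← intervalIntegral.integral_of_le zero_le_one, integral_rpow (Or.inl (by linarith)),
      sub_add_cancel, one_rpow, zero_rpow hr.ne', sub_zero]
  have hsub := (hf.comp_sub_left y).norm
  have hadd := (hf.comp_add_left y).norm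
  have htail : Integrable (fun u => ‖f (y - u)‖ + ‖f (y + u)‖) := hsub.add hadd
  unfold pvMajorant
  rw [integral_add (integrable_indicator_Ioc_const_mul_rpow_sub_one _ hr) htail,
    integral_add hsub hadd,
    integral_sub_left_eq_self (fun u => ‖f u‖), integral_add_left_eq_self (fun u => ‖f u‖),
    integral_indicator measurableSet_Ioc, integral_const_mul, hpow]
  ring

variable {C r : ℝ≥0}

theorem norm_sub_div_le_pvMajorant (hf : HolderWith C r f) (y : ℝ) {u : ℝ} (hu : 0 < u) :
    ‖(f (y - u) - f (y + u)) / (u : ℂ)‖ ≤ pvMajorant C r f y u := by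
  rw [norm_div, Complex.norm_real, Real.norm_of_nonneg hu.le, pvMajorant]
  rcases le_or_gt u 1 with h1 | h1
  · have hdist : dist (y - u) (y + u) = 2 * u := by
      rw [Real.dist_eq, show y - u - (y + u) = -(2 * u) by ring, abs_neg,
        abs_of_pos (by positivity)]
    rw [indicator_of_mem (mem_Ioc.2 ⟨hu, h1⟩)]
    calc ‖f (y - u) - f (y + u)‖ / u ≤ C * (2 * u) ^ (r : ℝ) / u := by
          gcongr
          rw [← dist_eq_norm, ← hdist]
          exact hf.dist_le (y - u) (y + u)
      _ = C * 2 ^ (r : ℝ) * u ^ ((r : ℝ) - 1) := by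
          rw [mul_rpow zero_le_two hu.le, rpow_sub_one hu.ne']
          ring
      _ ≤ _ := le_add_of_nonneg_right (by positivity)
  · rw [indicator_of_notMem (fun h => h1.not_ge h.2), zero_add]
    exact (div_le_self (norm_nonneg _) h1.le).trans (norm_sub_le _ _)

theorem integrableOn_sub_div (hf : Integrable f) (hr : 0 < r) (hh : HolderWith C r f) (y : ℝ) :
    IntegrableOn (fun u : ℝ => (f (y - u) - f (y + u)) / (u : ℂ)) (Ioi 0) := by
  refine (integrable_pvMajorant (C := C) (r := r) hr hf y).integrableOn.mono' ?_
    (ae_restrict_of_forall_mem measurableSet_Ioi fun u hu => norm_sub_div_le_pvMajorant hh y hu)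
  have hcont := hh.continuous hr
  exact Measurable.aestronglyMeasurable (by fun_prop)

theorem norm_truncatedPV_le (hf : Integrable f) (hr : 0 < r) (hh : HolderWith C r f)
    {ε : ℝ} (hε : 0 < ε) (y : ℝ) :
    ‖truncatedPV f ε y‖ ≤ C * 2 ^ (r : ℝ) / r + 2 * ∫ u, ‖f u‖ := by
  have hmaj := integrable_pvMajorant (C := C) (r := r) hr hf y
  have hnonneg (u : ℝ) : 0 ≤ pvMajorant C r f y u :=
    add_nonneg (indicator_nonneg (fun u hu => by have := hu.1; positivity) u) (by positivity)
  rw [truncatedPV_eq_setIntegral_Ioi hf hε, ← integral_pvMajorant (NNReal.coe_pos.2 hr) hf y]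
  refine (norm_integral_le_of_norm_le hmaj.integrableOn ?_).trans
    (setIntegral_le_integral hmaj (ae_of_all _ hnonneg))
  exact ae_restrict_of_forall_mem measurableSet_Ioi fun u hu =>
    norm_sub_div_le_pvMajorant hh y (hε.trans hu)

/-- In particular `pv f y`, a `limUnder`, is a genuine limit here. -/
theorem tendsto_truncatedPV (hf : Integrable f) (hr : 0 < r) (hh : HolderWith C r f) (y : ℝ) :
    Tendsto (fun ε => truncatedPV f ε y) (𝓝[>] 0) (𝓝 (pv f y)) := by
  have hlim := (aecover_Ioi_of_Ioi (μ := volume) (tendsto_id.mono_left nhdsWithin_le_nhds :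
    Tendsto id (𝓝[>] (0 : ℝ)) (𝓝 0))).integral_tendsto_of_countably_generated
    (integrableOn_sub_div hf hr hh y)
  refine tendsto_nhds_limUnder ⟨_, hlim.congr' ?_⟩
  filter_upwards [self_mem_nhdsWithin] with ε hε
  rw [truncatedPV_eq_setIntegral_Ioi hf hε, id, Measure.restrict_restrict measurableSet_Ioi,
    inter_eq_left.2 (Ioi_subset_Ioi (le_of_lt hε))]

end TruncatedPV

/-! ### The square identity for Hölder functions -/

section Symmetrization

theorem integrable_conj {α : Type*} [MeasurableSpace α] {μ : Measure α} {f : α → ℂ}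
    (hf : Integrable f μ) : Integrable (fun a => (starRingEnd ℂ) (f a)) μ :=
  hf.congr' (Complex.continuous_conj.comp_aestronglyMeasurable hf.aestronglyMeasurable)
    (ae_of_all _ fun _ => (Complex.norm_conj _).symm)

/-- Adding the conjugate and swapping the variables replaces the weight `a p.1` by
`a p.1 - a p.2`. -/
theorem two_mul_re_integral_fst_mul {α : Type*} [MeasurableSpace α] {μ : Measure α} [SFinite μ]
    {a : α → ℝ} {K : α × α → ℂ} (hK : ∀ p, (starRingEnd ℂ) (K p.swap) = -K p)
    (hint : Integrable (fun p => (a p.1 : ℂ) * K p) (μ.prod μ)) :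
    ((2 * (∫ p, (a p.1 : ℂ) * K p ∂μ.prod μ).re : ℝ) : ℂ) =
      ∫ p, ((a p.1 : ℂ) - a p.2) * K p ∂μ.prod μ := by
  have hswap (p : α × α) : (starRingEnd ℂ) ((a p.swap.1 : ℂ) * K p.swap) = -(a p.2 * K p) := by
    rw [map_mul, Complex.conj_ofReal, hK, mul_neg, Prod.fst_swap]
  have hint' : Integrable (fun p : α × α => -((a p.2 : ℂ) * K p)) (μ.prod μ) := by
    simpa only [Function.comp_def, hswap] using (integrable_conj hint).swap
  rw [← Complex.add_conj, ← integral_conj,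
    ← integral_prod_swap (fun p => (starRingEnd ℂ) ((a p.1 : ℂ) * K p))]
  simp only [hswap]
  rw [← integral_add hint hint']
  exact integral_congr_ae (ae_of_all _ fun p => by ring)

theorem measurableSet_lt_abs_sub (ε : ℝ) : MeasurableSet {p : ℝ × ℝ | ε < |p.1 - p.2|} :=
  measurableSet_lt measurable_const (by fun_prop)

theorem aecover_lt_abs_sub :
    AECover (volume : Measure (ℝ × ℝ)) (𝓝[>] 0) fun ε => {p : ℝ × ℝ | ε < |p.1 - p.2|} where
  ae_eventually_mem := by
    have hdiag : ∀ᵐ p : ℝ × ℝ, p.1 ≠ p.2 := by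
      refine (Measure.ae_prod_iff_ae_ae (p := fun p : ℝ × ℝ => p.1 ≠ p.2)
        (measurableSet_eq_fun measurable_fst measurable_snd).compl).2 (ae_of_all _ fun x => ?_)
      exact (Measure.ae_ne volume x).mono fun _ => Ne.symm
    filter_upwards [hdiag] with p hp
    exact nhdsWithin_le_nhds (Iio_mem_nhds (abs_pos.2 (sub_ne_zero.2 hp)))
  measurableSet := measurableSet_lt_abs_sub

/-- The kernel `f(y) conj(f(z)) / (y-z)` on `ℝ × ℝ`, cut off to `|y-z| > ε`. -/
noncomputable def truncatedKernel (f : ℝ → ℂ) (ε : ℝ) : ℝ × ℝ → ℂ :=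
  {p | ε < |p.1 - p.2|}.indicator fun p => f p.1 * (starRingEnd ℂ) (f p.2) / ((p.1 : ℂ) - p.2)

variable {f : ℝ → ℂ}

theorem conj_truncatedKernel_swap (ε : ℝ) (p : ℝ × ℝ) :
    (starRingEnd ℂ) (truncatedKernel f ε p.swap) = -truncatedKernel f ε p := by
  simp only [truncatedKernel, indicator, mem_ofPred_eq, Prod.fst_swap, Prod.snd_swap,
    abs_sub_comm p.2]
  split_ifs with h
  · rw [← neg_sub (p.1 : ℂ), div_neg, map_neg, map_div₀, map_mul, map_sub, Complex.conj_conj,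
      Complex.conj_ofReal, Complex.conj_ofReal, mul_comm]
  · rw [map_zero, neg_zero]

theorem integrable_fst_mul_truncatedKernel (hf : Integrable f)
    (hyf : Integrable fun y : ℝ => (y : ℂ) * f y) {ε : ℝ} (hε : 0 < ε) :
    Integrable (fun p : ℝ × ℝ => (p.1 : ℂ) * truncatedKernel f ε p) := by
  have hdiv := integrableOn_div_ofReal_of_lt_abs (d := fun p : ℝ × ℝ => p.1 - p.2)
    (hyf.mul_prod (integrable_conj hf)) (by fun_prop) hε
  refine (hdiv.integrable_indicator (measurableSet_lt_abs_sub ε)).congr (ae_of_all _ fun p => ?_)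
  simp only [truncatedKernel, indicator, mem_ofPred_eq, Complex.ofReal_sub]
  split_ifs <;> ring

theorem integral_mul_truncatedPV_conj (hf : Integrable f)
    (hyf : Integrable fun y : ℝ => (y : ℂ) * f y) {ε : ℝ} (hε : 0 < ε) :
    ∫ y : ℝ, (y : ℂ) * f y * truncatedPV (fun z => (starRingEnd ℂ) (f z)) ε y =
      ∫ p : ℝ × ℝ, (p.1 : ℂ) * truncatedKernel f ε p := by
  rw [Measure.volume_eq_prod, integral_prod _ (integrable_fst_mul_truncatedKernel hf hyf hε)]
  refine integral_congr_ae (ae_of_all _ fun y => ?_)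
  simp only
  rw [truncatedPV, ← integral_const_mul,
    ← integral_indicator (measurableSet_lt measurable_const (by fun_prop))]
  refine integral_congr_ae (ae_of_all _ fun z => ?_)
  simp only [truncatedKernel, indicator, mem_ofPred_eq]
  split_ifs <;> ring

theorem two_mul_re_integral_mul_truncatedPV_conj (hf : Integrable f)
    (hyf : Integrable fun y : ℝ => (y : ℂ) * f y) {ε : ℝ} (hε : 0 < ε) :
    ((2 * (∫ y : ℝ, (y : ℂ) * f y *
        truncatedPV (fun z => (starRingEnd ℂ) (f z)) ε y).re : ℝ) : ℂ) =
      ∫ p in {p : ℝ × ℝ | ε < |p.1 - p.2|}, f p.1 * (starRingEnd ℂ) (f p.2) := by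
  rw [integral_mul_truncatedPV_conj hf hyf hε,
    ← integral_indicator (measurableSet_lt_abs_sub ε)]
  refine (two_mul_re_integral_fst_mul (a := id) (conj_truncatedKernel_swap ε)
    (integrable_fst_mul_truncatedKernel hf hyf hε)).trans
    (integral_congr_ae (ae_of_all _ fun p => ?_))
  simp only [truncatedKernel, indicator, mem_ofPred_eq, id]
  split_ifs with h
  · have hne : (p.1 : ℂ) - p.2 ≠ 0 := by
      rw [← Complex.ofReal_sub, Complex.ofReal_ne_zero]
      exact abs_pos.1 (hε.trans h)
    exact mul_div_cancel₀ _ hne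
  · exact mul_zero _

theorem tendsto_setIntegral_mul_conj (hf : Integrable f) :
    Tendsto (fun ε : ℝ => ∫ p in {p : ℝ × ℝ | ε < |p.1 - p.2|},
      f p.1 * (starRingEnd ℂ) (f p.2)) (𝓝[>] 0) (𝓝 ((‖∫ y, f y‖ ^ 2 : ℝ) : ℂ)) := by
  have htotal : ∫ p : ℝ × ℝ, f p.1 * (starRingEnd ℂ) (f p.2) = ((‖∫ y, f y‖ ^ 2 : ℝ) : ℂ) := by
    rw [Measure.volume_eq_prod, integral_prod_mul f fun z => (starRingEnd ℂ) (f z), integral_conj,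
      Complex.mul_conj, Complex.normSq_eq_norm_sq]
  rw [← htotal]
  exact aecover_lt_abs_sub.integral_tendsto_of_countably_generated
    (hf.mul_prod (integrable_conj hf))

theorem tendsto_integral_mul_truncatedPV {C r : ℝ≥0} {g h : ℝ → ℂ} (hg : Integrable g)
    (hh : Integrable h) (hr : 0 < r) (hhol : HolderWith C r h) :
    Tendsto (fun ε => ∫ y, g y * truncatedPV h ε y) (𝓝[>] 0) (𝓝 (∫ y, g y * pv h y)) := by
  refine tendsto_integral_filter_of_dominated_convergence
    (fun y => ‖g y‖ * (C * 2 ^ (r : ℝ) / r + 2 * ∫ u, ‖h u‖)) ?_ ?_ (hg.norm.mul_const _) ?_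
  · exact Eventually.of_forall fun ε =>
      hg.aestronglyMeasurable.mul (aestronglyMeasurable_truncatedPV hh.aestronglyMeasurable ε)
  · filter_upwards [self_mem_nhdsWithin] with ε hε
    refine ae_of_all _ fun y => (norm_mul_le _ _).trans ?_
    exact mul_le_mul_of_nonneg_left (norm_truncatedPV_le hh hr hhol hε y) (norm_nonneg _)
  · exact ae_of_all _ fun y => (tendsto_truncatedPV hh hr hhol y).const_mul _

theorem norm_integral_sq_eq_two_mul_re_integral_pv {C r : ℝ≥0} (hr : 0 < r)
    (hhol : HolderWith C r f) (hf : Integrable f) (hyf : Integrable fun y : ℝ => (y : ℂ) * f y) :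
    ‖∫ y, f y‖ ^ 2 =
      2 * (∫ y : ℝ, (y : ℂ) * f y * pv (fun z => (starRingEnd ℂ) (f z)) y).re := by
  have hholconj : HolderWith C r fun z => (starRingEnd ℂ) (f z) := fun y z => by
    simpa only [Complex.isometry_conj.edist_eq] using hhol y z
  have hpv := tendsto_integral_mul_truncatedPV hyf (integrable_conj hf) hr hholconj
  have hre := ((Complex.continuous_re.tendsto _).comp hpv).const_mul 2
  refine Complex.ofReal_injective (tendsto_nhds_unique (tendsto_setIntegral_mul_conj hf)
    (((Complex.continuous_ofReal.tendsto _).comp hre).congr' ?_))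
  filter_upwards [self_mem_nhdsWithin] with ε hε
  exact two_mul_re_integral_mul_truncatedPV_conj hf hyf hε

end Symmetrization

/-! ### Temperate growth of the Airy function -/

section AiryMoments

/-- The weight `ξ^p (1 + ξ²)^{-q}`, by which the Airy phase is regularized. -/
noncomputable def airyWeight (p q : ℕ) (ξ : ℝ) : ℝ :=
  ξ ^ p * ((1 + ξ ^ 2)⁻¹) ^ q

theorem one_add_sq_mul_airyWeight_succ (p q : ℕ) (ξ : ℝ) :
    (1 + ξ ^ 2) * airyWeight p (q + 1) ξ = airyWeight p q ξ := by
  rw [airyWeight, airyWeight, pow_succ' _ q, mul_left_comm, mul_inv_cancel_left₀ (by positivity)]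

theorem hasDerivAt_airyWeight (p q : ℕ) (ξ : ℝ) :
    HasDerivAt (airyWeight p q) (p * airyWeight (p - 1) q ξ - 2 * q * airyWeight (p + 1) (q + 1) ξ)
      ξ := by
  have hbase : HasDerivAt (fun ξ : ℝ => 1 + ξ ^ 2) (2 * ξ) ξ := by
    simpa using (hasDerivAt_pow 2 ξ).const_add 1
  refine ((hasDerivAt_pow p ξ).mul ((hbase.fun_inv (by positivity)).fun_pow q)).congr_deriv ?_
  rcases q with _ | q
  · simp [airyWeight]
  · simp only [airyWeight, add_tsub_cancel_right, div_eq_mul_inv, ← inv_pow]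
    ring

theorem continuous_airyWeight (p q : ℕ) : Continuous (airyWeight p q) :=
  continuous_iff_continuousAt.2 fun ξ => (hasDerivAt_airyWeight p q ξ).continuousAt

theorem integrable_airyWeight {p q : ℕ} (h : p + 2 ≤ 2 * q) : Integrable (airyWeight p q) := by
  obtain ⟨m, rfl⟩ : ∃ m, q = m + 1 := ⟨q - 1, by omega⟩
  refine integrable_inv_one_add_sq.mono' (continuous_airyWeight p _).aestronglyMeasurable
    (ae_of_all _ fun ξ => ?_)
  have hone : 1 ≤ 1 + ξ ^ 2 := le_add_of_nonneg_right (sq_nonneg ξ)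
  have hpow : |ξ ^ p| ≤ (1 + ξ ^ 2) ^ m := by
    refine abs_le_of_sq_le_sq ?_ (by positivity)
    calc (ξ ^ p) ^ 2 = (ξ ^ 2) ^ p := pow_right_comm ξ p 2
      _ ≤ (1 + ξ ^ 2) ^ p := by gcongr; exact le_add_of_nonneg_left zero_le_one
      _ ≤ (1 + ξ ^ 2) ^ (m * 2) := pow_le_pow_right₀ hone (by omega)
      _ = ((1 + ξ ^ 2) ^ m) ^ 2 := pow_mul _ _ _
  rw [airyWeight, norm_mul, Real.norm_eq_abs, Real.norm_of_nonneg (by positivity), pow_succ,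
    ← mul_assoc, inv_pow]
  exact mul_le_of_le_one_left (by positivity) (mul_inv_le_one_of_le₀ hpow (by positivity))

/-- The Airy phase `exp (i (ξ³/3 + ξ z))` times `airyWeight p q ξ`. -/
noncomputable def airyIntegrand (p q : ℕ) (z ξ : ℝ) : ℂ :=
  Complex.exp ((ξ ^ 3 / 3 + ξ * z : ℝ) * Complex.I) * airyWeight p q ξ

/-- The regularized Airy integral `∫ ξ^p (1 + ξ²)^{-q} exp (i (ξ³/3 + ξ z)) dξ`. -/
noncomputable def airyMoment (p q : ℕ) (z : ℝ) : ℂ :=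
  ∫ ξ, airyIntegrand p q z ξ

theorem norm_airyIntegrand (p q : ℕ) (z ξ : ℝ) : ‖airyIntegrand p q z ξ‖ = |airyWeight p q ξ| := by
  rw [airyIntegrand, norm_mul, Complex.norm_exp_ofReal_mul_I, one_mul, Complex.norm_real,
    Real.norm_eq_abs]

theorem continuous_airyIntegrand (p q : ℕ) (z : ℝ) : Continuous (airyIntegrand p q z) := by
  have := continuous_airyWeight p q
  unfold airyIntegrand
  fun_prop

theorem integrable_airyIntegrand {p q : ℕ} (h : p + 2 ≤ 2 * q) (z : ℝ) :
    Integrable (airyIntegrand p q z) :=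
  (integrable_airyWeight h).congr' (continuous_airyIntegrand p q z).aestronglyMeasurable
    (ae_of_all _ fun ξ => (norm_airyIntegrand p q z ξ).symm)

theorem norm_airyMoment_le (p q : ℕ) (z : ℝ) : ‖airyMoment p q z‖ ≤ ∫ ξ, |airyWeight p q ξ| :=
  (norm_integral_le_integral_norm _).trans_eq (by simp only [norm_airyIntegrand])

theorem hasDerivAt_airyIntegrand_left (p q : ℕ) (z ξ : ℝ) :
    HasDerivAt (fun z => airyIntegrand p q z ξ) (Complex.I * airyIntegrand (p + 1) q z ξ) z := by
  have hphase : HasDerivAt (fun z : ℝ => ξ ^ 3 / 3 + ξ * z) ξ z := by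
    simpa using ((hasDerivAt_id z).const_mul ξ).const_add (ξ ^ 3 / 3)
  refine ((hphase.ofReal_comp.mul_const Complex.I).cexp.mul_const _).congr_deriv ?_
  simp only [airyIntegrand, airyWeight]
  push_cast
  ring

theorem hasDerivAt_airyMoment {p q : ℕ} (h : p + 3 ≤ 2 * q) (z : ℝ) :
    HasDerivAt (airyMoment p q) (Complex.I * airyMoment (p + 1) q z) z := by
  have hderiv := hasDerivAt_integral_of_dominated_loc_of_deriv_le (μ := volume)
    (F' := fun z ξ => Complex.I * airyIntegrand (p + 1) q z ξ)
    (bound := fun ξ => |airyWeight (p + 1) q ξ|) (Filter.univ_mem (f := 𝓝 z))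
    (Eventually.of_forall fun z => (continuous_airyIntegrand p q z).aestronglyMeasurable)
    (integrable_airyIntegrand (by omega) z)
    ((continuous_airyIntegrand (p + 1) q z).const_mul Complex.I).aestronglyMeasurable
    (ae_of_all _ fun ξ z _ => by
      rw [norm_mul, Complex.norm_I, one_mul, norm_airyIntegrand])
    (integrable_airyWeight (by omega)).abs
    (ae_of_all _ fun ξ z _ => hasDerivAt_airyIntegrand_left p q z ξ)
  exact hderiv.2.congr_deriv (integral_const_mul _ _)

theorem tendsto_airyIntegrand_zero_one_cobounded (z : ℝ) :
    Tendsto (airyIntegrand 0 1 z) (Bornology.cobounded ℝ) (𝓝 0) := by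
  have hsq : Tendsto (fun ξ : ℝ => 1 + ξ ^ 2) (Bornology.cobounded ℝ) atTop := by
    refine tendsto_atTop_add_const_left _ _ ?_
    simpa only [Function.comp_def, Real.norm_eq_abs, sq_abs] using
      (tendsto_pow_atTop two_ne_zero).comp (tendsto_norm_cobounded_atTop (E := ℝ))
  refine tendsto_zero_iff_norm_tendsto_zero.2 ((tendsto_inv_atTop_zero.comp hsq).congr fun ξ => ?_)
  rw [norm_airyIntegrand, airyWeight, pow_zero, one_mul, pow_one, abs_of_pos (by positivity),
    Function.comp_apply]

/-- What integration by parts leaves of `airyIntegrand p q z`, with two more powers of decay: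
the difference is an exact derivative (`hasDerivAt_airyIntegrand`). -/
noncomputable def airyIntegrandByParts (p q : ℕ) (z ξ : ℝ) : ℂ :=
  (1 - z) * airyIntegrand p (q + 1) z ξ +
    Complex.I * (p * airyIntegrand (p - 1) (q + 1) z ξ -
      2 * (q + 1) * airyIntegrand (p + 1) (q + 2) z ξ)

/-- The phase contributes the factor `ξ² + z = (1 + ξ²) - (1 - z)`, and `1 + ξ²` cancels one power
of the weight: this is the gain of the integration by parts. -/
theorem hasDerivAt_airyIntegrand (p q : ℕ) (z ξ : ℝ) :
    HasDerivAt (airyIntegrand p (q + 1) z)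
      (Complex.I * (airyIntegrand p q z ξ - airyIntegrandByParts p q z ξ)) ξ := by
  have hphase : HasDerivAt (fun ξ : ℝ => ξ ^ 3 / 3 + ξ * z) (ξ ^ 2 + z) ξ := by
    refine (((hasDerivAt_pow 3 ξ).div_const 3).add ((hasDerivAt_id ξ).mul_const z)).congr_deriv ?_
    norm_num
  refine ((hphase.ofReal_comp.mul_const Complex.I).cexp.mul
    (hasDerivAt_airyWeight p (q + 1) ξ).ofReal_comp).congr_deriv ?_
  simp only [airyIntegrandByParts, airyIntegrand, ← one_add_sq_mul_airyWeight_succ p q]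
  push_cast
  linear_combination Complex.exp ((ξ ^ 3 / 3 + ξ * z) * Complex.I) *
    (p * airyWeight (p - 1) (q + 1) ξ - 2 * (q + 1) * airyWeight (p + 1) (q + 2) ξ) * Complex.I_sq

theorem integrable_airyIntegrandByParts {p q : ℕ} (h : p ≤ 2 * q) (z : ℝ) :
    Integrable (airyIntegrandByParts p q z) :=
  ((integrable_airyIntegrand (by omega) z).const_mul _).add <|
    (((integrable_airyIntegrand (by omega) z).const_mul _).sub
      ((integrable_airyIntegrand (by omega) z).const_mul _)).const_mul _

theorem integral_airyIntegrandByParts {p q : ℕ} (h : p ≤ 2 * q) (z : ℝ) :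
    ∫ ξ, airyIntegrandByParts p q z ξ = (1 - z) * airyMoment p (q + 1) z +
      Complex.I * (p * airyMoment (p - 1) (q + 1) z -
        2 * (q + 1) * airyMoment (p + 1) (q + 2) z) := by
  have hA : Integrable fun ξ => (1 - z : ℂ) * airyIntegrand p (q + 1) z ξ :=
    (integrable_airyIntegrand (by omega) z).const_mul _
  have hB : Integrable fun ξ => (p : ℂ) * airyIntegrand (p - 1) (q + 1) z ξ :=
    (integrable_airyIntegrand (by omega) z).const_mul _
  have hC : Integrable fun ξ => 2 * (q + 1 : ℂ) * airyIntegrand (p + 1) (q + 2) z ξ :=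
    (integrable_airyIntegrand (by omega) z).const_mul _
  have hBC : Integrable fun ξ => Complex.I * ((p : ℂ) * airyIntegrand (p - 1) (q + 1) z ξ -
      2 * (q + 1 : ℂ) * airyIntegrand (p + 1) (q + 2) z ξ) := (hB.sub hC).const_mul _
  unfold airyIntegrandByParts airyMoment
  rw [integral_add hA hBC, integral_const_mul, integral_const_mul, integral_sub hB hC,
    integral_const_mul, integral_const_mul]

theorem airyMoment_eq {p q : ℕ} (h : p + 2 ≤ 2 * q) (z : ℝ) :
    airyMoment p q z = (1 - z) * airyMoment p (q + 1) z +
      Complex.I * (p * airyMoment (p - 1) (q + 1) z -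
        2 * (q + 1) * airyMoment (p + 1) (q + 2) z) := by
  have hA := integrable_airyIntegrand h z
  have hB := integrable_airyIntegrandByParts (p := p) (q := q) (by omega) z
  have hzero := integral_eq_zero_of_hasDerivAt_of_integrable
    (fun ξ => hasDerivAt_airyIntegrand p q z ξ) ((hA.sub hB).const_mul Complex.I)
    (integrable_airyIntegrand (by omega) z)
  rw [integral_const_mul, integral_sub hA hB, mul_eq_zero_iff_left Complex.I_ne_zero,
    sub_eq_zero] at hzero
  rw [← integral_airyIntegrandByParts (by omega), ← hzero, airyMoment]

theorem intervalIntegral_airyIntegrand (p q : ℕ) (z a b : ℝ) :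
    ∫ ξ in a..b, airyIntegrand p q z ξ = (∫ ξ in a..b, airyIntegrandByParts p q z ξ) -
      Complex.I * (airyIntegrand p (q + 1) z b - airyIntegrand p (q + 1) z a) := by
  have hA : Continuous (airyIntegrand p q z) := continuous_airyIntegrand p q z
  have hB : Continuous (airyIntegrandByParts p q z) := by
    have := continuous_airyIntegrand
    unfold airyIntegrandByParts
    fun_prop
  have hparts := intervalIntegral.integral_eq_sub_of_hasDerivAt
    (fun ξ _ => hasDerivAt_airyIntegrand p q z ξ)
    (((hA.sub hB).const_mul Complex.I).intervalIntegrable a b)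
  rw [intervalIntegral.integral_const_mul, intervalIntegral.integral_sub
    (hA.intervalIntegrable a b) (hB.intervalIntegrable a b)] at hparts
  rw [← hparts]
  linear_combination ((∫ ξ in a..b, airyIntegrand p q z ξ) -
    ∫ ξ in a..b, airyIntegrandByParts p q z ξ) * Complex.I_sq

theorem tendsto_intervalIntegral_airyIntegrand (z : ℝ) :
    Tendsto (fun R => ∫ ξ in -R..R, airyIntegrand 0 0 z ξ) atTop
      (𝓝 (∫ ξ, airyIntegrandByParts 0 0 z ξ)) := by
  have hboundary := tendsto_airyIntegrand_zero_one_cobounded z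
  have hR : Tendsto (fun R => airyIntegrand 0 1 z R) atTop (𝓝 0) :=
    hboundary.mono_left IsOrderBornology.atTop_le_cobounded
  have hnegR : Tendsto (fun R => airyIntegrand 0 1 z (-R)) atTop (𝓝 0) :=
    (hboundary.mono_left IsOrderBornology.atBot_le_cobounded).comp tendsto_neg_atTop_atBot
  have hint := intervalIntegral_tendsto_integral
    (integrable_airyIntegrandByParts (p := 0) (q := 0) le_rfl z) tendsto_neg_atTop_atBot tendsto_id
  have hlim := hint.sub ((hR.sub hnegR).const_mul Complex.I)
  rw [sub_zero, mul_zero, sub_zero] at hlim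
  exact hlim.congr fun R => (intervalIntegral_airyIntegrand 0 0 z (-R) R).symm

theorem intervalIntegral_airyIntegrand_zero_zero (z R : ℝ) :
    ∫ ξ in -R..R, airyIntegrand 0 0 z ξ =
      ((2 * ∫ ξ in (0 : ℝ)..R, Real.cos (ξ ^ 3 / 3 + ξ * z) : ℝ) : ℂ) := by
  have hint (a b : ℝ) : IntervalIntegrable (airyIntegrand 0 0 z) volume a b :=
    (continuous_airyIntegrand 0 0 z).intervalIntegrable a b
  have hintneg (a b : ℝ) : IntervalIntegrable (fun ξ => airyIntegrand 0 0 z (-ξ)) volume a b :=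
    ((continuous_airyIntegrand 0 0 z).comp continuous_neg).intervalIntegrable a b
  have hsum (ξ : ℝ) : airyIntegrand 0 0 z (-ξ) + airyIntegrand 0 0 z ξ =
      ((2 * Real.cos (ξ ^ 3 / 3 + ξ * z) : ℝ) : ℂ) := by
    simp only [airyIntegrand, airyWeight, pow_zero, mul_one, Complex.ofReal_one]
    rw [Complex.ofReal_mul, Complex.ofReal_cos, Complex.ofReal_ofNat, Complex.two_cos, add_comm]
    congr 2
    push_cast
    ring
  calc ∫ ξ in -R..R, airyIntegrand 0 0 z ξ
      = (∫ ξ in -R..0, airyIntegrand 0 0 z ξ) + ∫ ξ in 0..R, airyIntegrand 0 0 z ξ :=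
        (intervalIntegral.integral_add_adjacent_intervals (hint _ _) (hint _ _)).symm
    _ = ∫ ξ in 0..R, (airyIntegrand 0 0 z (-ξ) + airyIntegrand 0 0 z ξ) := by
        rw [intervalIntegral.integral_add (hintneg _ _) (hint _ _),
          intervalIntegral.integral_comp_neg (airyIntegrand 0 0 z), neg_zero]
    _ = _ := by
        simp only [hsum]
        rw [intervalIntegral.integral_ofReal, intervalIntegral.integral_const_mul]

theorem hasTemperateGrowth_of_forall_hasDerivAt {E : Type*} [NormedAddCommGroup E]
    [NormedSpace ℝ E] {P : (ℝ → E) → Prop}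
    (hderiv : ∀ f, P f → ∃ f', P f' ∧ ∀ z, HasDerivAt f (f' z) z)
    (hbound : ∀ f, P f → ∃ k : ℕ, f =O[⊤] fun z : ℝ => (1 + ‖z‖) ^ k) {f : ℝ → E} (hf : P f) :
    f.HasTemperateGrowth := by
  have hiter (n : ℕ) : P (iteratedDeriv n f) := by
    induction n with
    | zero => rwa [iteratedDeriv_zero]
    | succ n ih =>
      obtain ⟨f', hf', hd⟩ := hderiv _ ih
      rwa [iteratedDeriv_succ, deriv_eq hd]
  refine Function.hasTemperateGrowth_iff_isBigO.2
    ⟨contDiff_of_differentiable_iteratedDeriv fun n _ z => ?_, fun n => ?_⟩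
  · obtain ⟨_, _, hd⟩ := hderiv _ (hiter n)
    exact (hd z).differentiableAt
  · obtain ⟨k, hk⟩ := hbound _ (hiter n)
    exact ⟨k, (hk.norm_left.congr_left fun z =>
      norm_iteratedFDeriv_eq_norm_iteratedDeriv.symm).of_norm_left⟩

theorem ofReal_limUnder {ι : Type*} {l : Filter ι} [l.NeBot] {g : ι → ℝ} {w : ℂ}
    (h : Tendsto (fun i => (g i : ℂ)) l (𝓝 w)) : ((limUnder l g : ℝ) : ℂ) = w := by
  have hre : Tendsto g l (𝓝 w.re) := by
    simpa only [Function.comp_def, Complex.ofReal_re] using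
      (Complex.continuous_re.tendsto w).comp h
  rw [hre.limUnder_eq]
  exact tendsto_nhds_unique ((Complex.continuous_ofReal.tendsto _).comp hre) h

theorem ofReal_Ai (z : ℝ) :
    (Ai z : ℂ) = 1 / (2 * π) * ((1 - z) * airyMoment 0 1 z - 2 * Complex.I * airyMoment 1 2 z) := by
  refine ofReal_limUnder (((tendsto_intervalIntegral_airyIntegrand z).const_mul
    (1 / (2 * π) : ℂ)).congr' (Eventually.of_forall fun R => ?_) |>.trans_eq ?_)
  · rw [intervalIntegral_airyIntegrand_zero_zero]
    push_cast
    field_simp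
  · rw [integral_airyIntegrandByParts (Nat.zero_le _)]
    congr 1
    push_cast
    ring

-- The integral of the derivative may diverge here: `airyMoment_eq` first improves the decay.
theorem hasDerivAt_airyMoment_of_add_two_le {p q : ℕ} (h : p + 2 ≤ 2 * q) (z : ℝ) :
    HasDerivAt (airyMoment p q)
      ((1 - z) * (Complex.I * airyMoment (p + 1) (q + 1) z) - airyMoment p (q + 1) z +
        Complex.I * (p * (Complex.I * airyMoment (p - 1 + 1) (q + 1) z) -
          2 * (q + 1) * (Complex.I * airyMoment (p + 1 + 1) (q + 2) z))) z := by
  have hA := hasDerivAt_airyMoment (p := p) (q := q + 1) (by omega) z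
  have hB := hasDerivAt_airyMoment (p := p - 1) (q := q + 1) (by omega) z
  have hC := hasDerivAt_airyMoment (p := p + 1) (q := q + 2) (by omega) z
  have hone_sub : HasDerivAt (fun z : ℝ => (1 - z : ℂ)) (-1) z :=
    (hasDerivAt_id z).ofReal_comp.const_sub 1
  rw [show airyMoment p q = _ from funext (airyMoment_eq h)]
  exact ((hone_sub.mul hA).add (((hB.const_mul _).sub (hC.const_mul _)).const_mul
    Complex.I)).congr_deriv (by ring)

/-- The module generated over the polynomials in `z` by the convergent Airy moments. It is stable
under differentiation and contains `Ai`. -/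
inductive IsAiryCombination : (ℝ → ℂ) → Prop
  | moment {p q : ℕ} (h : p + 2 ≤ 2 * q) : IsAiryCombination (airyMoment p q)
  | add {f g : ℝ → ℂ} (hf : IsAiryCombination f) (hg : IsAiryCombination g) :
      IsAiryCombination fun z => f z + g z
  | const_mul (c : ℂ) {f : ℝ → ℂ} (hf : IsAiryCombination f) : IsAiryCombination fun z => c * f z
  | id_mul {f : ℝ → ℂ} (hf : IsAiryCombination f) : IsAiryCombination fun z => z * f z

namespace IsAiryCombination

variable {f g : ℝ → ℂ}

theorem sub (hf : IsAiryCombination f) (hg : IsAiryCombination g) :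
    IsAiryCombination fun z => f z - g z := by
  simpa only [neg_one_mul, ← sub_eq_add_neg] using hf.add (hg.const_mul (-1))

theorem one_sub_mul (hf : IsAiryCombination f) : IsAiryCombination fun z => (1 - z) * f z := by
  simpa only [sub_mul, one_mul] using hf.sub hf.id_mul

theorem exists_hasDerivAt (hf : IsAiryCombination f) :
    ∃ f', IsAiryCombination f' ∧ ∀ z, HasDerivAt f (f' z) z := by
  induction hf with
  | @moment p q h =>
    have hmoment {p q : ℕ} (h : p + 2 ≤ 2 * q) :
        IsAiryCombination fun z => Complex.I * airyMoment p q z :=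
      (moment h).const_mul _
    exact ⟨_, ((hmoment (by omega)).one_sub_mul.sub (moment (by omega))).add
      ((((hmoment (by omega)).const_mul _).sub ((hmoment (by omega)).const_mul _)).const_mul _),
      hasDerivAt_airyMoment_of_add_two_le h⟩
  | add _ _ ihf ihg =>
    obtain ⟨⟨f', hf', hdf⟩, g', hg', hdg⟩ := ihf, ihg
    exact ⟨_, hf'.add hg', fun z => (hdf z).add (hdg z)⟩
  | const_mul c _ ih =>
    obtain ⟨f', hf', hdf⟩ := ih
    exact ⟨_, hf'.const_mul c, fun z => (hdf z).const_mul c⟩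
  | id_mul hf ih =>
    obtain ⟨f', hf', hdf⟩ := ih
    refine ⟨_, hf.add hf'.id_mul, fun z => ?_⟩
    exact ((hasDerivAt_id z).ofReal_comp.mul (hdf z)).congr_deriv (by simp)

theorem exists_isBigO (hf : IsAiryCombination f) :
    ∃ k : ℕ, f =O[⊤] fun z : ℝ => (1 + ‖z‖) ^ k := by
  induction hf with
  | @moment p q _ =>
    refine ⟨0, Asymptotics.IsBigO.of_bound (∫ ξ, |airyWeight p q ξ|) <|
      eventually_top.2 fun z => ?_⟩
    rw [pow_zero, norm_one, mul_one]
    exact norm_airyMoment_le p q z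
  | add _ _ ihf ihg =>
    obtain ⟨⟨k, hk⟩, l, hl⟩ := ihf, ihg
    have hpow {m n : ℕ} (h : m ≤ n) :
        (fun z : ℝ => (1 + ‖z‖) ^ m) =O[⊤] fun z : ℝ => (1 + ‖z‖) ^ n :=
      Asymptotics.isBigO_of_le _ fun z => by
        rw [norm_pow, norm_pow, Real.norm_of_nonneg (by positivity)]
        exact pow_le_pow_right₀ (le_add_of_nonneg_right (norm_nonneg z)) h
    exact ⟨max k l, (hk.trans (hpow (le_max_left k l))).add (hl.trans (hpow (le_max_right k l)))⟩
  | const_mul c _ ih =>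
    obtain ⟨k, hk⟩ := ih
    exact ⟨k, hk.const_mul_left c⟩
  | id_mul _ ih =>
    obtain ⟨k, hk⟩ := ih
    have hid : (fun z : ℝ => (z : ℂ)) =O[⊤] fun z => 1 + ‖z‖ :=
      Asymptotics.isBigO_of_le _ fun z => by
        rw [Complex.norm_real, Real.norm_of_nonneg (r := 1 + ‖z‖) (by positivity)]
        exact le_add_of_nonneg_left zero_le_one
    exact ⟨k + 1, by simpa only [pow_succ'] using hid.mul hk⟩

theorem hasTemperateGrowth (hf : IsAiryCombination f) : f.HasTemperateGrowth :=
  hasTemperateGrowth_of_forall_hasDerivAt (fun _ => exists_hasDerivAt) (fun _ => exists_isBigO) hf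

end IsAiryCombination

theorem hasTemperateGrowth_ofReal_Ai : (fun z => (Ai z : ℂ)).HasTemperateGrowth := by
  have hAi : IsAiryCombination fun z => (Ai z : ℂ) := by
    simp only [ofReal_Ai]
    exact ((IsAiryCombination.moment (by norm_num)).one_sub_mul.sub
      ((IsAiryCombination.moment (by norm_num)).const_mul _)).const_mul _
  exact hAi.hasTemperateGrowth

end AiryMoments

section Schwartz

theorem lipschitzWith_schwartz {E F : Type*} [NormedAddCommGroup E] [NormedSpace ℝ E]
    [NormedAddCommGroup F] [NormedSpace ℝ F] (f : SchwartzMap E F) :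
    LipschitzWith (SchwartzMap.seminorm ℝ 0 1 f).toNNReal f := by
  refine lipschitzWith_of_nnnorm_fderiv_le f.differentiable fun x => ?_
  rw [← NNReal.coe_le_coe, coe_nnnorm, ← norm_iteratedFDeriv_one]
  exact (f.norm_iteratedFDeriv_le_seminorm ℝ 1 x).trans (le_coe_toNNReal _)

theorem integrable_ofReal_mul_schwartz (f : SchwartzMap ℝ ℂ) :
    Integrable fun y : ℝ => (y : ℂ) * f y :=
  (SchwartzMap.smulLeftCLM ℂ Complex.ofReal f).integrable.congr <|
    ae_of_all _ (SchwartzMap.smulLeftCLM_apply_apply Function.Complex.hasTemperateGrowth_ofReal f)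

theorem norm_integral_schwartz_sq_eq (f : SchwartzMap ℝ ℂ) :
    ‖∫ y, f y‖ ^ 2 =
      2 * (∫ y : ℝ, (y : ℂ) * f y * pv (fun z => (starRingEnd ℂ) (f z)) y).re :=
  norm_integral_sq_eq_two_mul_re_integral_pv one_pos (holderWith_one.2 (lipschitzWith_schwartz f))
    f.integrable (integrable_ofReal_mul_schwartz f)

theorem exists_schwartz_eq_Ai_mul (φ : SchwartzMap ℝ ℂ) (x : ℝ) :
    ∃ f : SchwartzMap ℝ ℂ, ∀ y, f y = (Ai (x - y) : ℂ) * φ y := by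
  have hAi : (fun y => (Ai (x - y) : ℂ)).HasTemperateGrowth :=
    hasTemperateGrowth_ofReal_Ai.comp (by fun_prop)
  exact ⟨SchwartzMap.smulLeftCLM ℂ (fun y => (Ai (x - y) : ℂ)) φ,
    SchwartzMap.smulLeftCLM_apply_apply hAi φ⟩

end Schwartz

theorem U_one_apply (φ : ℝ → ℂ) (x : ℝ) : U 1 φ x = ∫ y, (Ai (x - y) : ℂ) * φ y := by
  simp only [U, one_rpow, inv_one, one_smul, div_one]

/-- For Schwartz `φ` and every `x`,
`|U(1)φ(x)|² = 2 Re ∫ Ai(x-y) yφ(y) [p.v. ∫ Ai(x-z) conj(φ(z))/(y-z) dz] dy`. -/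
theorem kdv_square_identity (φ : SchwartzMap ℝ ℂ) (x : ℝ) :
    ‖U 1 (⇑φ) x‖ ^ 2 =
      2 * (∫ y : ℝ, (Ai (x - y) : ℂ) * ((y : ℂ) * φ y) *
        pv (fun z : ℝ => (Ai (x - z) : ℂ) * (starRingEnd ℂ) (φ z)) y).re := by
  obtain ⟨f, hf⟩ := exists_schwartz_eq_Ai_mul φ x
  have hconj (z : ℝ) : (starRingEnd ℂ) (f z) = (Ai (x - z) : ℂ) * (starRingEnd ℂ) (φ z) := by
    rw [hf, map_mul, Complex.conj_ofReal]
  rw [U_one_apply]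
  simp only [← hconj, ← hf, mul_left_comm (Ai _ : ℂ)]
  exact norm_integral_schwartz_sq_eq f
end

section
/- For every λ > 0, the function ψ(y) = 1/(1 + (y/λ)²) attains equality in the Cauchy–Schwarz inequality |∫_ℝ y ψ(y) (Hψ)(y) dy| ≤ ‖yψ(y)‖_{L²} ‖ψ‖_{L²}; that is, ∫_ℝ y ψ(y) (Hψ)(y) dy = ‖yψ(y)‖_{L²} ‖ψ‖_{L²}. -/
open MeasureTheory Filter Real Set
open scoped ENNReal Topology

/-- The (real) Hilbert transform, defined pointwise by the principal value integral
`(Hf)(y) = (1/π) lim_{ε→0⁺} ∫_{|y-z|>ε} f(z)/(y-z) dz`. -/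
noncomputable def hilbertT (f : ℝ → ℝ) (y : ℝ) : ℝ :=
  (1 / π) * limUnder (𝓝[>] (0:ℝ))
    (fun ε => ∫ z in {z : ℝ | ε < |y - z|}, f z / (y - z))

/-!
For `f` integrable, folding the truncated integral along `z = y ± t` gives
`π (Hf)(y) = ∫₀^∞ (f(y - t) - f(y + t)) / t dt` as soon as the right-hand side converges absolutely.
For `f(z) = 1 / (1 + z²)` the integrand is `4y f(y - t) f(y + t)`: the singularity is gone, and an
elementary primitive yields `(Hf)(y) = y f(y)`. Since `H` commutes with dilations,
`(Hψ)(y) = (y/λ) ψ(y)`, so `yψ = λ Hψ` and the Cauchy–Schwarz inequality for `yψ` and `Hψ` is an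
equality. Finally `‖Hψ‖ = ‖ψ‖`: here the isometry of `H` amounts to `∫ (x f(x))² dx = ∫ f(x)² dx`,
which holds because `f² - (x f)²` is the derivative of `x f(x)`, a function vanishing at `±∞`.
-/

lemma integral_const_mul_mul_eq_sqrt_mul_sqrt {α : Type*} {m : MeasurableSpace α} {μ : Measure α}
    {c : ℝ} (hc : 0 ≤ c) (g : α → ℝ) :
    ∫ x, c * g x * g x ∂μ = √(∫ x, (c * g x) ^ 2 ∂μ) * √(∫ x, g x ^ 2 ∂μ) := by
  have hg : 0 ≤ ∫ x, g x ^ 2 ∂μ := integral_nonneg fun x => sq_nonneg (g x)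
  simp only [mul_pow, mul_assoc, ← sq, integral_const_mul]
  rw [sqrt_mul (sq_nonneg c), sqrt_sq hc, mul_assoc, mul_self_sqrt hg]

section TruncatedIntegral

variable {E : Type*} [NormedAddCommGroup E] [NormedSpace ℝ E]

lemma setIntegral_lt_abs_eq_integral_Ioi {g : ℝ → E} {a : ℝ} (ha : 0 ≤ a)
    (hg : IntegrableOn g {t | a < |t|}) :
    ∫ t in {t | a < |t|}, g t = ∫ t in Ioi a, (g t + g (-t)) := by
  have hset : {t : ℝ | a < |t|} = Iio (-a) ∪ Ioi a := by
    ext t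
    simp only [mem_ofPred_eq, lt_abs, mem_union, mem_Iio, mem_Ioi, lt_neg, or_comm]
  have hdisj : Disjoint (Iio (-a)) (Ioi a) :=
    Set.disjoint_left.2 fun t (h : t < -a) (h' : a < t) => by linarith
  rw [hset] at hg ⊢
  have hright : IntegrableOn (fun t => g (-t)) (Ioi a) := by
    simpa using hg.left_of_union.comp_neg
  rw [setIntegral_union hdisj measurableSet_Ioi hg.left_of_union hg.right_of_union,
    integral_add hg.right_of_union hright, integral_comp_neg_Ioi, integral_Iic_eq_integral_Iio,
    add_comm]

lemma tendsto_integral_Ioi_nhdsGT {α : Type*} [LinearOrder α] [TopologicalSpace α]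
    [OrderClosedTopology α] [FirstCountableTopology α] [MeasurableSpace α]
    [OpensMeasurableSpace α] {μ : Measure α} {g : α → E} {a : α} (hg : IntegrableOn g (Ioi a) μ) :
    Tendsto (fun b => ∫ t in Ioi b, g t ∂μ) (𝓝[>] a) (𝓝 (∫ t in Ioi a, g t ∂μ)) := by
  have hcover : AECover (μ.restrict (Ioi a)) (𝓝[>] a) fun b => Ioi b :=
    aecover_Ioi_of_Ioi (tendsto_id.mono_left nhdsWithin_le_nhds)
  refine (hcover.integral_tendsto_of_countably_generated hg).congr' ?_
  filter_upwards [self_mem_nhdsWithin] with b (hb : a < b)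
  rw [Measure.restrict_restrict measurableSet_Ioi, inter_eq_left.2 (Ioi_subset_Ioi hb.le)]

end TruncatedIntegral

section HilbertTransform

variable {f : ℝ → ℝ} {ε : ℝ}

lemma integrableOn_div_id_lt_abs (hf : Integrable f) (hε : 0 < ε) :
    IntegrableOn (fun t => f t / t) {t | ε < |t|} := by
  have hmeas : MeasurableSet {t : ℝ | ε < |t|} := measurableSet_lt measurable_const (by fun_prop)
  refine hf.integrableOn.mul_bdd (c := ε⁻¹) measurable_inv.aestronglyMeasurable ?_
  filter_upwards [ae_restrict_mem hmeas] with t (ht : ε < |t|)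
  rw [norm_inv, norm_eq_abs]
  gcongr

lemma setIntegral_lt_abs_sub_eq_integral_Ioi (hf : Integrable f) (hε : 0 < ε) (y : ℝ) :
    ∫ z in {z | ε < |y - z|}, f z / (y - z) = ∫ t in Ioi ε, (f (y - t) - f (y + t)) / t := by
  calc ∫ z in {z | ε < |y - z|}, f z / (y - z)
      = ∫ t in {t | ε < |t|}, f (y - t) / t := by
        simpa using! (volume.measurePreserving_sub_left y).setIntegral_preimage_emb
          (MeasurableEquiv.subLeft y).measurableEmbedding (fun t => f (y - t) / t) {t | ε < |t|}
    _ = ∫ t in Ioi ε, (f (y - t) / t + f (y - -t) / -t) :=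
        setIntegral_lt_abs_eq_integral_Ioi hε.le
          (integrableOn_div_id_lt_abs (hf.comp_sub_left y) hε)
    _ = ∫ t in Ioi ε, (f (y - t) - f (y + t)) / t := by
        simp only [sub_neg_eq_add, div_neg, ← sub_eq_add_neg, sub_div]

lemma hilbertT_eq_integral_Ioi (hf : Integrable f) {y : ℝ}
    (hfy : IntegrableOn (fun t => (f (y - t) - f (y + t)) / t) (Ioi 0)) :
    hilbertT f y = (1 / π) * ∫ t in Ioi 0, (f (y - t) - f (y + t)) / t := by
  have hlim : Tendsto (fun ε => ∫ z in {z | ε < |y - z|}, f z / (y - z)) (𝓝[>] 0)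
      (𝓝 (∫ t in Ioi 0, (f (y - t) - f (y + t)) / t)) := by
    refine (tendsto_integral_Ioi_nhdsGT hfy).congr' ?_
    filter_upwards [self_mem_nhdsWithin] with ε hε
    exact (setIntegral_lt_abs_sub_eq_integral_Ioi hf hε y).symm
  rw [hilbertT, hlim.limUnder_eq]

lemma setIntegral_lt_abs_sub_comp_div {c : ℝ} (hc : 0 < c) (f : ℝ → ℝ) (ε y : ℝ) :
    ∫ z in {z | ε < |y - z|}, f (z / c) / (y - z) =
      ∫ w in {w | c⁻¹ * ε < |y / c - w|}, f w / (y / c - w) := by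
  have hmeas (δ x : ℝ) : MeasurableSet {z : ℝ | δ < |x - z|} :=
    measurableSet_lt measurable_const (by fun_prop)
  let G : ℝ → ℝ := indicator {w | c⁻¹ * ε < |y / c - w|} fun w => f w / (y / c - w)
  calc ∫ z in {z | ε < |y - z|}, f (z / c) / (y - z)
      = ∫ z, c⁻¹ * G (z / c) := by
        rw [← integral_indicator (hmeas _ _)]
        congr 1 with z
        have hmem : c⁻¹ * ε < |y / c - z / c| ↔ ε < |y - z| := by
          rw [← sub_div, abs_div, abs_of_pos hc, inv_mul_eq_div, div_lt_div_iff_of_pos_right hc]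
        simp only [G, indicator_apply, mem_ofPred_eq, hmem, mul_ite, mul_zero]
        congr 1
        field_simp
    _ = ∫ w, G w := by
        rw [integral_const_mul, Measure.integral_comp_div, abs_of_pos hc, smul_eq_mul,
          inv_mul_cancel_left₀ hc.ne']
    _ = ∫ w in {w | c⁻¹ * ε < |y / c - w|}, f w / (y / c - w) := integral_indicator (hmeas _ _)

lemma hilbertT_comp_div {c : ℝ} (hc : 0 < c) (f : ℝ → ℝ) (y : ℝ) :
    hilbertT (fun z => f (z / c)) y = hilbertT f (y / c) := by
  have hmap : map (c⁻¹ * ·) (𝓝[>] (0 : ℝ)) = 𝓝[>] 0 := by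
    conv_lhs => rw [← comap_mulLeft_nhdsGT_zero (inv_pos.2 hc)]
    exact map_comap_of_surjective (mul_left_surjective₀ (inv_ne_zero hc.ne')) _
  simp only [hilbertT, limUnder, setIntegral_lt_abs_sub_comp_div hc]
  conv_rhs => rw [← hmap, map_map, Function.comp_def]

end HilbertTransform

section CauchyKernel

lemma tendsto_inv_one_add_sq_cobounded :
    Tendsto (fun x : ℝ => (1 + x ^ 2)⁻¹) (Bornology.cobounded ℝ) (𝓝 0) := by
  have hsq : Tendsto (fun x : ℝ => x ^ 2) (Bornology.cobounded ℝ) atTop := by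
    simpa [Function.comp_def] using
      (tendsto_pow_atTop two_ne_zero).comp (tendsto_norm_cobounded_atTop (E := ℝ))
  exact tendsto_inv_atTop_zero.comp (tendsto_atTop_add_const_left _ 1 hsq)

lemma tendsto_mul_inv_one_add_sq_cobounded :
    Tendsto (fun x : ℝ => x * (1 + x ^ 2)⁻¹) (Bornology.cobounded ℝ) (𝓝 0) := by
  have h := tendsto_inv₀_cobounded.sub (tendsto_inv₀_cobounded.mul tendsto_inv_one_add_sq_cobounded)
  rw [mul_zero, sub_zero] at h
  refine h.congr fun x => ?_
  rcases eq_or_ne x 0 with rfl | hx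
  · simp
  · field_simp
    ring

lemma tendsto_one_add_sq_add_div_one_add_sq (a : ℝ) :
    Tendsto (fun x : ℝ => (1 + (x + a) ^ 2) / (1 + x ^ 2)) (Bornology.cobounded ℝ) (𝓝 1) := by
  have h := ((tendsto_mul_inv_one_add_sq_cobounded.const_mul (2 * a)).const_add 1).add
    (tendsto_inv_one_add_sq_cobounded.const_mul (a ^ 2))
  simp only [mul_zero, add_zero] at h
  refine h.congr fun x => ?_
  have hx : 1 + x ^ 2 ≠ 0 := by positivity
  field_simp
  ring

lemma hasDerivAt_mul_inv_one_add_sq (x : ℝ) :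
    HasDerivAt (fun x : ℝ => x * (1 + x ^ 2)⁻¹)
      ((1 + x ^ 2)⁻¹ ^ 2 - (x * (1 + x ^ 2)⁻¹) ^ 2) x := by
  have hx : 1 + x ^ 2 ≠ 0 := by positivity
  refine ((hasDerivAt_id x).fun_mul
    ((((hasDerivAt_id x).fun_pow 2).const_add 1).fun_inv hx)).congr_deriv ?_
  simp only [id]
  field_simp
  ring

lemma norm_inv_one_add_sq_le_one (x : ℝ) : ‖(1 + x ^ 2)⁻¹‖ ≤ 1 := by
  rw [norm_of_nonneg (by positivity)]
  exact inv_le_one_of_one_le₀ (le_add_of_nonneg_right (sq_nonneg x))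

lemma integrable_inv_one_add_sq_mul_inv_one_add_sq (a b : ℝ) :
    Integrable fun x : ℝ => (1 + (a - x) ^ 2)⁻¹ * (1 + (b + x) ^ 2)⁻¹ :=
  (integrable_inv_one_add_sq.comp_sub_left a).mul_bdd (c := 1) (by fun_prop)
    (ae_of_all _ fun x => norm_inv_one_add_sq_le_one (b + x))

lemma integral_mul_inv_one_add_sq_sq :
    ∫ x : ℝ, (x * (1 + x ^ 2)⁻¹) ^ 2 = ∫ x : ℝ, (1 + x ^ 2)⁻¹ ^ 2 := by
  have hint : Integrable fun x : ℝ => (1 + x ^ 2)⁻¹ ^ 2 := by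
    simpa [sq] using integrable_inv_one_add_sq_mul_inv_one_add_sq 0 0
  have hint' : Integrable fun x : ℝ => (x * (1 + x ^ 2)⁻¹) ^ 2 := by
    refine (integrable_inv_one_add_sq.sub hint).congr (ae_of_all _ fun x => ?_)
    have hx : 1 + x ^ 2 ≠ 0 := by positivity
    simp only [Pi.sub_apply]
    field_simp
    ring
  have h := integral_of_hasDerivAt_of_tendsto hasDerivAt_mul_inv_one_add_sq (hint.sub hint')
    (tendsto_mul_inv_one_add_sq_cobounded.mono_left IsOrderBornology.atBot_le_cobounded)
    (tendsto_mul_inv_one_add_sq_cobounded.mono_left IsOrderBornology.atTop_le_cobounded)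
  rw [integral_sub hint hint', sub_zero, sub_eq_zero] at h
  exact h.symm

end CauchyKernel

section CauchyHilbert

/-- The primitive, vanishing at `t = 0`, of the symmetrised integrand
`4y / ((1 + (y - t)²) (1 + (y + t)²))` of the Hilbert transform of `1 / (1 + z²)` at `y`. It comes
from the partial fractions `(2y - t) / (1 + (t - y)²) + (2y + t) / (1 + (t + y)²)` of `1 + y²` times
that integrand; the logarithm is that of a quotient so that it tends to `0` at infinity. -/
noncomputable def cauchyPrim (y t : ℝ) : ℝ :=
  (y * (arctan (t - y) + arctan (t + y)) + log ((1 + (t + y) ^ 2) / (1 + (t - y) ^ 2)) / 2) /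
    (1 + y ^ 2)

lemma cauchyPrim_zero (y : ℝ) : cauchyPrim y 0 = 0 := by
  have hy : 1 + y ^ 2 ≠ 0 := by positivity
  simp [cauchyPrim, arctan_neg, hy]

lemma hasDerivAt_cauchyPrim (y t : ℝ) :
    HasDerivAt (cauchyPrim y) (4 * y * ((1 + (y - t) ^ 2)⁻¹ * (1 + (y + t) ^ 2)⁻¹)) t := by
  have hsub : 1 + (t - y) ^ 2 ≠ 0 := by positivity
  have hadd : 1 + (t + y) ^ 2 ≠ 0 := by positivity
  have dsub := (hasDerivAt_id t).sub_const y
  have dadd := (hasDerivAt_id t).add_const y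
  have darctan := (dsub.arctan.fun_add dadd.arctan).const_mul y
  have dlog := ((((dadd.fun_pow 2).const_add 1).fun_div ((dsub.fun_pow 2).const_add 1) hsub).log
    (div_ne_zero hadd hsub)).div_const 2
  refine ((darctan.fun_add dlog).div_const (1 + y ^ 2)).congr_deriv ?_
  have hy : 1 + y ^ 2 ≠ 0 := by positivity
  rw [← neg_sub t y, neg_sq, add_comm y t]
  simp only [id]
  field_simp
  push_cast
  ring

lemma tendsto_cauchyPrim_atTop (y : ℝ) :
    Tendsto (cauchyPrim y) atTop (𝓝 (π * y / (1 + y ^ 2))) := by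
  have harctan (a : ℝ) : Tendsto (fun t => arctan (t + a)) atTop (𝓝 (π / 2)) :=
    (tendsto_arctan_atTop.mono_right nhdsWithin_le_nhds).comp
      (tendsto_atTop_add_const_right _ a tendsto_id)
  have hratio : Tendsto (fun t => (1 + (t + y) ^ 2) / (1 + (t - y) ^ 2)) atTop (𝓝 1) := by
    have h := (tendsto_one_add_sq_add_div_one_add_sq (2 * y)).comp
      ((tendsto_atTop_add_const_right _ (-y) tendsto_id).mono_right
        IsOrderBornology.atTop_le_cobounded)
    refine h.congr fun t => ?_
    simp only [Function.comp_apply, id]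
    ring_nf
  have h := ((((harctan (-y)).add (harctan y)).const_mul y).add
    ((hratio.log one_ne_zero).div_const 2)).div_const (1 + y ^ 2)
  rw [log_one, zero_div, add_zero, add_halves, mul_comm y] at h
  exact h

lemma inv_one_add_sq_sub_div {t : ℝ} (ht : t ≠ 0) (y : ℝ) :
    ((1 + (y - t) ^ 2)⁻¹ - (1 + (y + t) ^ 2)⁻¹) / t =
      4 * y * ((1 + (y - t) ^ 2)⁻¹ * (1 + (y + t) ^ 2)⁻¹) := by
  have hsub : 1 + (y - t) ^ 2 ≠ 0 := by positivity
  have hadd : 1 + (y + t) ^ 2 ≠ 0 := by positivity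
  field_simp
  ring

lemma hilbertT_inv_one_add_sq (y : ℝ) :
    hilbertT (fun z => (1 + z ^ 2)⁻¹) y = y * (1 + y ^ 2)⁻¹ := by
  have heq : EqOn (fun t => ((1 + (y - t) ^ 2)⁻¹ - (1 + (y + t) ^ 2)⁻¹) / t)
      (fun t => 4 * y * ((1 + (y - t) ^ 2)⁻¹ * (1 + (y + t) ^ 2)⁻¹)) (Ioi 0) :=
    fun t (ht : 0 < t) => inv_one_add_sq_sub_div ht.ne' y
  have hint : IntegrableOn (fun t => 4 * y * ((1 + (y - t) ^ 2)⁻¹ * (1 + (y + t) ^ 2)⁻¹)) (Ioi 0) :=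
    ((integrable_inv_one_add_sq_mul_inv_one_add_sq y y).const_mul (4 * y)).integrableOn
  rw [hilbertT_eq_integral_Ioi integrable_inv_one_add_sq
      (hint.congr_fun heq.symm measurableSet_Ioi), setIntegral_congr_fun measurableSet_Ioi heq,
    integral_Ioi_of_hasDerivAt_of_tendsto' (fun t _ => hasDerivAt_cauchyPrim y t) hint
      (tendsto_cauchyPrim_atTop y), cauchyPrim_zero]
  field_simp
  ring

end CauchyHilbert

/-- For every `λ > 0`, `ψ(y) = 1/(1+(y/λ)²)` attains equality in the Cauchy–Schwarz
inequality: `∫ y ψ(y) (Hψ)(y) dy = ‖yψ‖_{L²} ‖ψ‖_{L²}`. -/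
theorem hilbert_cauchy_schwarz_equality (lam : ℝ) (hlam : 0 < lam) :
    (∫ y : ℝ, y * (1 / (1 + (y / lam) ^ 2)) *
        hilbertT (fun z : ℝ => 1 / (1 + (z / lam) ^ 2)) y) =
      Real.sqrt (∫ y : ℝ, (y * (1 / (1 + (y / lam) ^ 2))) ^ 2) *
        Real.sqrt (∫ y : ℝ, (1 / (1 + (y / lam) ^ 2)) ^ 2) := by
  simp only [one_div]
  have hH (y : ℝ) : hilbertT (fun z => (1 + (z / lam) ^ 2)⁻¹) y =
      y / lam * (1 + (y / lam) ^ 2)⁻¹ := by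
    rw [hilbertT_comp_div hlam fun z => (1 + z ^ 2)⁻¹, hilbertT_inv_one_add_sq]
  have hparallel (y : ℝ) : y * (1 + (y / lam) ^ 2)⁻¹ =
      lam * hilbertT (fun z => (1 + (z / lam) ^ 2)⁻¹) y := by
    rw [hH]
    field_simp
  have hisometry : ∫ y, hilbertT (fun z => (1 + (z / lam) ^ 2)⁻¹) y ^ 2 =
      ∫ y, (1 + (y / lam) ^ 2)⁻¹ ^ 2 := by
    simp only [hH]
    rw [Measure.integral_comp_div (fun x => (x * (1 + x ^ 2)⁻¹) ^ 2),
      Measure.integral_comp_div (fun x => (1 + x ^ 2)⁻¹ ^ 2), integral_mul_inv_one_add_sq_sq]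
  simp only [hparallel]
  rw [integral_const_mul_mul_eq_sqrt_mul_sqrt hlam.le, hisometry]
end

section
/- There is a constant C > 0 such that for every real x, |Ai(x)| ≤ C (1+|x|)^{−1/4}. -/
/-!
The truncated integrals are real parts of `∫₀ᴿ exp (i φ)` for the phase `φ(ξ) = ξ³/3 + ξ z`, with
`φ' = ξ² + z` and `φ'' = 2ξ`, and van der Corput's two derivative tests bound them uniformly in `R`.
Write `w = (1 + |z|)^{1/4}` and cut at `ξ = w²/2`. Beyond the cut `φ'' ≥ w²`, so the second
derivative test gives `O(1/w)`, whether or not the phase has a stationary point there. Before the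
cut, `ξ² ≤ (1 + |z|)/4` keeps `φ'` away from zero when `|z| ≥ 1`, for either sign of `z`, and when
`|z| ≤ 1` the interval itself is short. The limit exists because `φ' → ∞`.
-/

open MeasureTheory Filter Real Set
open scoped ENNReal Topology

section DerivativeTests

/-- The oscillatory integral of the phase `φ` over `[a, b]`, with amplitude one. -/
noncomputable def oscIntegral (φ : ℝ → ℝ) (a b : ℝ) : ℂ :=
  ∫ x in a..b, Complex.exp (φ x * Complex.I)

variable {φ φ' φ'' : ℝ → ℝ} {a b c l m δ : ℝ}

lemma intervalIntegrable_cexp_mul_I (hφ : ContinuousOn φ (uIcc a b)) :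
    IntervalIntegrable (fun x => Complex.exp (φ x * Complex.I)) volume a b :=
  ContinuousOn.intervalIntegrable (by fun_prop)

lemma norm_oscIntegral_le_sub (φ : ℝ → ℝ) (hab : a ≤ b) : ‖oscIntegral φ a b‖ ≤ b - a := by
  have h := intervalIntegral.norm_integral_le_of_norm_le_const (a := a) (b := b)
    fun x _ => (Complex.norm_exp_ofReal_mul_I (φ x)).le
  rwa [one_mul, abs_of_nonneg (sub_nonneg.2 hab)] at h

lemma norm_oscIntegral_le_add (hφ : ContinuousOn φ (Icc a b)) (hc : c ∈ Icc a b) :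
    ‖oscIntegral φ a b‖ ≤ ‖oscIntegral φ a c‖ + ‖oscIntegral φ c b‖ := by
  have hac : uIcc a c ⊆ Icc a b := uIcc_of_le hc.1 ▸ Icc_subset_Icc_right hc.2
  have hcb : uIcc c b ⊆ Icc a b := uIcc_of_le hc.2 ▸ Icc_subset_Icc_left hc.1
  rw [oscIntegral, ← intervalIntegral.integral_add_adjacent_intervals
    (intervalIntegrable_cexp_mul_I (hφ.mono hac)) (intervalIntegrable_cexp_mul_I (hφ.mono hcb))]
  exact norm_add_le _ _

lemma re_oscIntegral (hφ : ContinuousOn φ (uIcc a b)) :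
    (oscIntegral φ a b).re = ∫ x in a..b, Real.cos (φ x) := by
  rw [oscIntegral, ← Complex.reCLM_apply,
    ← Complex.reCLM.intervalIntegral_comp_comm (intervalIntegrable_cexp_mul_I hφ)]
  simp only [Complex.reCLM_apply, Complex.exp_ofReal_mul_I_re]

lemma intervalIntegrable_deriv_of_nonpos {u u' : ℝ → ℝ} (hab : a ≤ b)
    (hu : ∀ x ∈ Icc a b, HasDerivAt u (u' x) x) (hu' : ∀ x ∈ Icc a b, u' x ≤ 0) :
    IntervalIntegrable u' volume a b := by
  have hneg : IntervalIntegrable (-u') volume a b := by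
    refine intervalIntegral.intervalIntegrable_deriv_of_nonneg (g := -u)
      (uIcc_of_le hab ▸ HasDerivAt.continuousOn fun x hx => (hu x hx).neg) ?_ ?_ <;>
      rw [min_eq_left hab, max_eq_right hab] <;>
      intro x hx
    · exact (hu x (Ioo_subset_Icc_self hx)).neg
    · exact neg_nonneg.2 (hu' x (Ioo_subset_Icc_self hx))
  exact neg_neg u' ▸ hneg.neg

section IntegrationByParts

variable {E : Type*} [NormedAddCommGroup E] [NormedSpace ℝ E] {u u' : ℝ → ℝ} {v v' : ℝ → E} {M : ℝ}

lemma norm_integral_deriv_smul_le (hab : a ≤ b)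
    (hu : ∀ x ∈ Icc a b, HasDerivAt u (u' x) x) (hu' : ∀ x ∈ Icc a b, u' x ≤ 0)
    (hM : ∀ x ∈ Icc a b, ‖v x‖ ≤ M) : ‖∫ x in a..b, u' x • v x‖ ≤ (u a - u b) * M := by
  have hint := intervalIntegrable_deriv_of_nonpos hab hu hu'
  calc ‖∫ x in a..b, u' x • v x‖
      ≤ ∫ x in a..b, -u' x * M := by
        refine intervalIntegral.norm_integral_le_of_norm_le hab
          (Eventually.of_forall fun x hx => ?_) (hint.neg.mul_const M)
        have hx' := Ioc_subset_Icc_self hx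
        rw [norm_smul, Real.norm_eq_abs, abs_of_nonpos (hu' x hx')]
        exact mul_le_mul_of_nonneg_left (hM x hx') (neg_nonneg.2 (hu' x hx'))
    _ = (u a - u b) * M := by
        rw [intervalIntegral.integral_mul_const, intervalIntegral.integral_neg,
          intervalIntegral.integral_eq_sub_of_hasDerivAt (uIcc_of_le hab ▸ hu) hint, neg_sub]

lemma norm_integral_smul_deriv_le [CompleteSpace E] (hab : a ≤ b)
    (hu : ∀ x ∈ Icc a b, HasDerivAt u (u' x) x) (hv : ∀ x ∈ Icc a b, HasDerivAt v (v' x) x)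
    (hu' : ∀ x ∈ Icc a b, u' x ≤ 0) (hv' : IntervalIntegrable v' volume a b)
    (hM : ∀ x ∈ Icc a b, ‖v x‖ ≤ M) :
    ‖∫ x in a..b, u x • v' x‖ ≤ (|u b| + |u a| + (u a - u b)) * M := by
  have hbdry : ∀ x ∈ Icc a b, ‖u x • v x‖ ≤ |u x| * M := fun x hx => by
    rw [norm_smul, Real.norm_eq_abs]
    exact mul_le_mul_of_nonneg_left (hM x hx) (abs_nonneg _)
  rw [intervalIntegral.integral_smul_deriv_eq_deriv_smul (uIcc_of_le hab ▸ hu)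
    (uIcc_of_le hab ▸ hv) (intervalIntegrable_deriv_of_nonpos hab hu hu') hv']
  calc ‖u b • v b - u a • v a - ∫ x in a..b, u' x • v x‖
      ≤ ‖u b • v b‖ + ‖u a • v a‖ + ‖∫ x in a..b, u' x • v x‖ :=
        (norm_sub_le _ _).trans (add_le_add_left (norm_sub_le _ _) _)
    _ ≤ |u b| * M + |u a| * M + (u a - u b) * M :=
        add_le_add_three (hbdry b (right_mem_Icc.2 hab)) (hbdry a (left_mem_Icc.2 hab))
          (norm_integral_deriv_smul_le hab hu hu' hM)
    _ = (|u b| + |u a| + (u a - u b)) * M := by ring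

end IntegrationByParts

lemma hasDerivAt_neg_I_mul_cexp {x : ℝ} (hφ : HasDerivAt φ (φ' x) x) :
    HasDerivAt (fun y => -Complex.I * Complex.exp (φ y * Complex.I))
      (φ' x • Complex.exp (φ x * Complex.I)) x := by
  refine ((hφ.ofReal_comp.mul_const Complex.I).cexp.const_mul (-Complex.I)).congr_deriv ?_
  rw [Complex.real_smul]
  linear_combination (-φ' x * Complex.exp (φ x * Complex.I)) * Complex.I_mul_I

/-- **Van der Corput's first derivative test**. Integrate `exp (i φ) = (1 / φ') (φ' exp (i φ))` by
parts; since `φ'' ≥ 0`, the variation of `1 / φ'` is read off its endpoint values. -/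
theorem norm_oscIntegral_le_of_le_abs_deriv (hab : a ≤ b)
    (hφ : ∀ x ∈ Icc a b, HasDerivAt φ (φ' x) x) (hφ' : ∀ x ∈ Icc a b, HasDerivAt φ' (φ'' x) x)
    (hφ'' : ∀ x ∈ Icc a b, 0 ≤ φ'' x) (hl : 0 < l) (hlφ : ∀ x ∈ Icc a b, l ≤ |φ' x|) :
    ‖oscIntegral φ a b‖ ≤ 4 / l := by
  have hne : ∀ x ∈ Icc a b, φ' x ≠ 0 := fun x hx => abs_pos.1 (hl.trans_le (hlφ x hx))
  have hinv : ∀ x ∈ Icc a b, |(φ' x)⁻¹| ≤ l⁻¹ := fun x hx => by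
    rw [abs_inv]
    exact inv_anti₀ hl (hlφ x hx)
  have hφc : ContinuousOn φ (uIcc a b) := uIcc_of_le hab ▸ HasDerivAt.continuousOn hφ
  have hφ'c : ContinuousOn φ' (uIcc a b) := uIcc_of_le hab ▸ HasDerivAt.continuousOn hφ'
  have hparts := norm_integral_smul_deriv_le (M := 1) hab
    (fun x hx => (hφ' x hx).inv (hne x hx)) (fun x hx => hasDerivAt_neg_I_mul_cexp (hφ x hx))
    (fun x hx => div_nonpos_of_nonpos_of_nonneg (neg_nonpos.2 (hφ'' x hx)) (sq_nonneg _))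
    ((intervalIntegrable_cexp_mul_I hφc).continuousOn_smul hφ'c)
    (fun x _ => by
      rw [norm_mul, norm_neg, Complex.norm_I, one_mul, Complex.norm_exp_ofReal_mul_I])
  have heq : oscIntegral φ a b
      = ∫ x in a..b, φ'⁻¹ x • φ' x • Complex.exp (φ x * Complex.I) := by
    refine intervalIntegral.integral_congr fun x hx => ?_
    exact (inv_smul_smul₀ (hne x (uIcc_of_le hab ▸ hx)) _).symm
  have ha := hinv a (left_mem_Icc.2 hab)
  have hb := hinv b (right_mem_Icc.2 hab)
  simp only [heq, Pi.inv_apply, div_eq_mul_inv] at hparts ⊢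
  linarith [le_abs_self (φ' a)⁻¹, neg_le_abs (φ' b)⁻¹]

lemma exists_mul_abs_sub_le_abs_of_le_deriv {f f' : ℝ → ℝ} (hab : a ≤ b)
    (hf : ∀ x ∈ Icc a b, HasDerivAt f (f' x) x) (hm : ∀ x ∈ Icc a b, m ≤ f' x) :
    ∃ c ∈ Icc a b, ∀ x ∈ Icc a b, m * |x - c| ≤ |f x| := by
  have hcont : ContinuousOn f (Icc a b) := HasDerivAt.continuousOn hf
  have hgrow : ∀ x ∈ Icc a b, ∀ y ∈ Icc a b, x ≤ y → m * (y - x) ≤ f y - f x :=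
    (convex_Icc a b).mul_sub_le_image_sub_of_le_deriv hcont
      (fun x hx => (hf x (interior_subset hx)).differentiableAt.differentiableWithinAt)
      (fun x hx => (hf x (interior_subset hx)).deriv ▸ hm x (interior_subset hx))
  obtain ⟨c, hc, hleft, hright⟩ :
      ∃ c ∈ Icc a b, (a < c → f c ≤ 0) ∧ (c < b → 0 ≤ f c) := by
    rcases le_total 0 (f a) with ha | ha
    · exact ⟨a, left_mem_Icc.2 hab, fun h => (lt_irrefl a h).elim, fun _ => ha⟩
    rcases le_total (f b) 0 with hb | hb
    · exact ⟨b, right_mem_Icc.2 hab, fun _ => hb, fun h => (lt_irrefl b h).elim⟩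
    obtain ⟨c, hc, hc0⟩ := intermediate_value_Icc hab hcont ⟨ha, hb⟩
    exact ⟨c, hc, fun _ => hc0.le, fun _ => hc0.ge⟩
  refine ⟨c, hc, fun x hx => ?_⟩
  rcases lt_trichotomy x c with hxc | rfl | hcx
  · rw [abs_of_neg (sub_neg.2 hxc)]
    linarith [hgrow x hx c hc hxc.le, hleft (hx.1.trans_lt hxc), neg_le_abs (f x)]
  · simp only [sub_self, abs_zero, mul_zero, abs_nonneg]
  · rw [abs_of_pos (sub_pos.2 hcx)]
    linarith [hgrow c hc x hx hcx.le, hright (hcx.trans_le hx.2), le_abs_self (f x)]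

lemma norm_oscIntegral_le_of_mul_abs_sub_le_abs_deriv
    (hφ : ∀ x ∈ Icc a b, HasDerivAt φ (φ' x) x) (hφ' : ∀ x ∈ Icc a b, HasDerivAt φ' (φ'' x) x)
    (hφ'' : ∀ x ∈ Icc a b, 0 ≤ φ'' x) (hm : 0 < m) (hδ : 0 < δ) (hc : c ∈ Icc a b)
    (hmφ : ∀ x ∈ Icc a b, m * |x - c| ≤ |φ' x|) :
    ‖oscIntegral φ a b‖ ≤ 2 * (δ + 4 / (m * δ)) := by
  have hcont : ContinuousOn φ (Icc a b) := HasDerivAt.continuousOn hφ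
  have hfar : ∀ p q, p ≤ q → Icc p q ⊆ Icc a b → (∀ x ∈ Icc p q, δ ≤ |x - c|) →
      ‖oscIntegral φ p q‖ ≤ 4 / (m * δ) := fun p q hpq hsub hdist =>
    norm_oscIntegral_le_of_le_abs_deriv hpq (fun x hx => hφ x (hsub hx))
      (fun x hx => hφ' x (hsub hx)) (fun x hx => hφ'' x (hsub hx)) (mul_pos hm hδ)
      fun x hx => (mul_le_mul_of_nonneg_left (hdist x hx) hm.le).trans (hmφ x (hsub hx))
  have hfar_nonneg : 0 ≤ 4 / (m * δ) := by positivity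
  have hleft : ‖oscIntegral φ a c‖ ≤ δ + 4 / (m * δ) := by
    have hsub : Icc a c ⊆ Icc a b := Icc_subset_Icc_right hc.2
    rcases le_total (c - δ) a with h | h
    · linarith [norm_oscIntegral_le_sub φ hc.1]
    have hnear := norm_oscIntegral_le_sub φ (sub_le_self c hδ.le)
    have := hfar a (c - δ) h ((Icc_subset_Icc_right (sub_le_self c hδ.le)).trans hsub)
      fun x hx => by linarith [hx.2, neg_le_abs (x - c)]
    linarith [norm_oscIntegral_le_add (hcont.mono hsub) ⟨h, sub_le_self c hδ.le⟩]
  have hright : ‖oscIntegral φ c b‖ ≤ δ + 4 / (m * δ) := by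
    have hsub : Icc c b ⊆ Icc a b := Icc_subset_Icc_left hc.1
    have hcδ : c ≤ c + δ := le_add_of_nonneg_right hδ.le
    rcases le_total b (c + δ) with h | h
    · linarith [norm_oscIntegral_le_sub φ hc.2]
    have hnear := norm_oscIntegral_le_sub φ hcδ
    have := hfar (c + δ) b h ((Icc_subset_Icc_left hcδ).trans hsub)
      fun x hx => by linarith [hx.1, le_abs_self (x - c)]
    linarith [norm_oscIntegral_le_add (hcont.mono hsub) ⟨hcδ, h⟩]
  linarith [norm_oscIntegral_le_add hcont hc]

/-- **Van der Corput's second derivative test**. Since `φ'` moves away from its smallest absolute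
value at rate at least `m`, the first derivative test applies outside a short interval. -/
theorem norm_oscIntegral_le_of_le_second_deriv (hab : a ≤ b)
    (hφ : ∀ x ∈ Icc a b, HasDerivAt φ (φ' x) x) (hφ' : ∀ x ∈ Icc a b, HasDerivAt φ' (φ'' x) x)
    (hm : 0 < m) (hmφ : ∀ x ∈ Icc a b, m ≤ φ'' x) :
    ‖oscIntegral φ a b‖ ≤ 8 / √m := by
  obtain ⟨c, hc, hcφ⟩ := exists_mul_abs_sub_le_abs_of_le_deriv hab hφ' hmφ
  have hsqrt : 0 < √m := Real.sqrt_pos.2 hm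
  -- `δ = 2 / √m` balances the two terms of `δ + 4 / (m δ)`.
  refine (norm_oscIntegral_le_of_mul_abs_sub_le_abs_deriv hφ hφ'
    (fun x hx => hm.le.trans (hmφ x hx)) hm (div_pos two_pos hsqrt) hc hcφ).trans_eq ?_
  nth_rewrite 2 [← Real.sq_sqrt hm.le]
  field_simp
  norm_num

theorem exists_tendsto_oscIntegral_of_tendsto_deriv_atTop
    (hφ : ∀ x ∈ Ici a, HasDerivAt φ (φ' x) x) (hφ' : ∀ x ∈ Ici a, HasDerivAt φ' (φ'' x) x)
    (hφ'' : ∀ x ∈ Ici a, 0 ≤ φ'' x) (hlim : Tendsto φ' atTop atTop) :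
    ∃ L, Tendsto (oscIntegral φ a) atTop (𝓝 L) := by
  have hint : ∀ R, a ≤ R →
      IntervalIntegrable (fun x => Complex.exp (φ x * Complex.I)) volume a R := fun R hR =>
    intervalIntegrable_cexp_mul_I <| HasDerivAt.continuousOn fun x hx =>
      hφ x (uIcc_of_le hR ▸ hx).1
  refine cauchySeq_tendsto_of_complete (Metric.cauchySeq_iff'.2 fun ε hε => ?_)
  obtain ⟨N, hN⟩ := eventually_atTop.1 (hlim.eventually_ge_atTop (8 / ε))
  have haN : Ici (max a N) ⊆ Ici a := Ici_subset_Ici.2 (le_max_left a N)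
  refine ⟨max a N, fun R hR => ?_⟩
  have htail : ‖oscIntegral φ (max a N) R‖ ≤ 4 / (8 / ε) :=
    norm_oscIntegral_le_of_le_abs_deriv hR (fun x hx => hφ x (haN hx.1))
      (fun x hx => hφ' x (haN hx.1)) (fun x hx => hφ'' x (haN hx.1)) (by positivity)
      fun x hx => (hN x ((le_max_right a N).trans hx.1)).trans (le_abs_self _)
  calc dist (oscIntegral φ a R) (oscIntegral φ a (max a N))
      = ‖oscIntegral φ (max a N) R‖ := by
        rw [dist_eq_norm, oscIntegral, oscIntegral,
          intervalIntegral.integral_interval_sub_left (hint R (haN hR))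
            (hint _ (le_max_left a N)), oscIntegral]
    _ ≤ 4 / (8 / ε) := htail
    _ = ε / 2 := by field_simp; norm_num
    _ < ε := half_lt_self hε

end DerivativeTests

section Airy

/-- The phase of the integral defining `Ai z`, as a function of the frequency `ξ`. -/
noncomputable def airyPhase (z ξ : ℝ) : ℝ := ξ ^ 3 / 3 + ξ * z

lemma hasDerivAt_airyPhase (z ξ : ℝ) : HasDerivAt (airyPhase z) (ξ ^ 2 + z) ξ := by
  refine (((hasDerivAt_pow 3 ξ).div_const 3).add
    ((hasDerivAt_id ξ).mul_const z)).congr_deriv ?_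
  push_cast
  ring

lemma hasDerivAt_deriv_airyPhase (z ξ : ℝ) :
    HasDerivAt (fun ξ : ℝ => ξ ^ 2 + z) (2 * ξ) ξ := by
  simpa using (hasDerivAt_pow 2 ξ).add_const z

lemma continuous_airyPhase (z : ℝ) : Continuous (airyPhase z) :=
  continuous_iff_continuousAt.2 fun ξ => (hasDerivAt_airyPhase z ξ).continuousAt

lemma exists_tendsto_oscIntegral_airyPhase (z : ℝ) :
    ∃ L, Tendsto (oscIntegral (airyPhase z) 0) atTop (𝓝 L) :=
  exists_tendsto_oscIntegral_of_tendsto_deriv_atTop (fun ξ _ => hasDerivAt_airyPhase z ξ)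
    (fun ξ _ => hasDerivAt_deriv_airyPhase z ξ) (fun _ hξ => mul_nonneg zero_le_two hξ)
    (tendsto_atTop_add_const_right _ z (tendsto_pow_atTop two_ne_zero))

lemma Ai_eq_re_of_tendsto {z : ℝ} {L : ℂ}
    (hL : Tendsto (oscIntegral (airyPhase z) 0) atTop (𝓝 L)) : Ai z = 1 / π * L.re := by
  have hre := ((Complex.continuous_re.tendsto L).comp hL).const_mul (1 / π)
  refine Tendsto.limUnder_eq (hre.congr fun R => ?_)
  rw [Function.comp_apply, re_oscIntegral (continuous_airyPhase z).continuousOn]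
  rfl

variable {z w b R : ℝ}

lemma norm_oscIntegral_airyPhase_le_of_le_half_sq (hw : 1 ≤ w) (hwz : w ^ 4 = 1 + |z|)
    (hb : 0 ≤ b) (hbw : b ≤ w ^ 2 / 2) : ‖oscIntegral (airyPhase z) 0 b‖ ≤ 16 / w := by
  have hw0 : 0 < w := one_pos.trans_le hw
  rcases le_total 1 |z| with hz | hz
  · have hderiv : ∀ ξ ∈ Icc 0 b, w / 4 ≤ |ξ ^ 2 + z| := fun ξ hξ => by
      have hsq : ξ ^ 2 ≤ w ^ 4 / 4 :=
        calc ξ ^ 2 ≤ (w ^ 2 / 2) ^ 2 := pow_le_pow_left₀ hξ.1 (hξ.2.trans hbw) 2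
          _ = w ^ 4 / 4 := by ring
      have htri : |z| ≤ |ξ ^ 2 + z| + ξ ^ 2 :=
        calc |z| = |ξ ^ 2 + z - ξ ^ 2| := by rw [add_sub_cancel_left]
          _ ≤ |ξ ^ 2 + z| + |ξ ^ 2| := abs_sub _ _
          _ = |ξ ^ 2 + z| + ξ ^ 2 := by rw [abs_of_nonneg (sq_nonneg ξ)]
      have hw4 : w ≤ w ^ 4 := le_self_pow₀ hw four_ne_zero
      linarith
    refine (norm_oscIntegral_le_of_le_abs_deriv hb (fun ξ _ => hasDerivAt_airyPhase z ξ)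
      (fun ξ _ => hasDerivAt_deriv_airyPhase z ξ) (fun ξ hξ => mul_nonneg zero_le_two hξ.1)
      (by positivity) hderiv).trans_eq ?_
    field_simp
    norm_num
  · have hw3 : w ^ 3 ≤ 2 := by
      linarith [pow_le_pow_right₀ hw (show 3 ≤ 4 by norm_num)]
    calc ‖oscIntegral (airyPhase z) 0 b‖ ≤ b - 0 := norm_oscIntegral_le_sub _ hb
      _ ≤ w ^ 2 / 2 := by linarith
      _ ≤ 16 / w := by
        rw [le_div_iff₀ hw0]
        linarith [show w ^ 2 / 2 * w = w ^ 3 / 2 by ring]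

lemma norm_oscIntegral_airyPhase_half_sq_le (hw : 0 < w) (hR : w ^ 2 / 2 ≤ R) :
    ‖oscIntegral (airyPhase z) (w ^ 2 / 2) R‖ ≤ 8 / w := by
  have h := norm_oscIntegral_le_of_le_second_deriv hR (fun ξ _ => hasDerivAt_airyPhase z ξ)
    (fun ξ _ => hasDerivAt_deriv_airyPhase z ξ) (pow_pos hw 2) fun ξ hξ => by linarith [hξ.1]
  rwa [Real.sqrt_sq hw.le] at h

lemma norm_oscIntegral_airyPhase_le (z : ℝ) (hR : 0 ≤ R) :
    ‖oscIntegral (airyPhase z) 0 R‖ ≤ 24 * (1 + |z|) ^ (-(1 / 4) : ℝ) := by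
  have hz : 0 ≤ |z| := abs_nonneg z
  obtain ⟨w, hwdef⟩ : ∃ w, w = (1 + |z|) ^ (1 / 4 : ℝ) := ⟨_, rfl⟩
  have hw : 1 ≤ w := hwdef ▸ Real.one_le_rpow (by linarith) (by norm_num)
  have hwz : w ^ 4 = 1 + |z| := by
    rw [hwdef, ← Real.rpow_mul_natCast (by linarith)]
    norm_num
  have hw0 : 0 < w := one_pos.trans_le hw
  rw [Real.rpow_neg (by linarith), ← hwdef, ← div_eq_mul_inv]
  rcases le_total R (w ^ 2 / 2) with h | h
  · refine (norm_oscIntegral_airyPhase_le_of_le_half_sq hw hwz hR h).trans ?_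
    gcongr
    norm_num
  · have hcut : 0 ≤ w ^ 2 / 2 := by positivity
    calc ‖oscIntegral (airyPhase z) 0 R‖
        ≤ ‖oscIntegral (airyPhase z) 0 (w ^ 2 / 2)‖
          + ‖oscIntegral (airyPhase z) (w ^ 2 / 2) R‖ :=
          norm_oscIntegral_le_add (continuous_airyPhase z).continuousOn ⟨hcut, h⟩
      _ ≤ 16 / w + 8 / w :=
          add_le_add (norm_oscIntegral_airyPhase_le_of_le_half_sq hw hwz hcut le_rfl)
            (norm_oscIntegral_airyPhase_half_sq_le hw0 h)
      _ = 24 / w := by ring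

end Airy

/-- There is `C > 0` such that `|Ai x| ≤ C (1+|x|)^{-1/4}` for every real `x`. -/
theorem airy_decay_bound :
    ∃ C : ℝ, 0 < C ∧ ∀ x : ℝ, |Ai x| ≤ C * (1 + |x|) ^ (-(1/4) : ℝ) := by
  refine ⟨24, by norm_num, fun x => ?_⟩
  obtain ⟨L, hL⟩ := exists_tendsto_oscIntegral_airyPhase x
  have hLb : ‖L‖ ≤ 24 * (1 + |x|) ^ (-(1/4) : ℝ) :=
    le_of_tendsto hL.norm <| (eventually_ge_atTop 0).mono fun _ hR =>
      norm_oscIntegral_airyPhase_le x hR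
  have hπ : |1 / π| ≤ 1 := by
    rw [abs_of_pos (by positivity), div_le_one Real.pi_pos]
    linarith [Real.pi_gt_three]
  calc |Ai x| = |1 / π| * |L.re| := by rw [Ai_eq_re_of_tendsto hL, abs_mul]
    _ ≤ |L.re| := mul_le_of_le_one_left (abs_nonneg _) hπ
    _ ≤ ‖L‖ := Complex.abs_re_le_norm L
    _ ≤ 24 * (1 + |x|) ^ (-(1/4) : ℝ) := hLb
end
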